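/- Let (x_i) be a normalized weakly null Schauder basis for a Banach space X such that ℓ1 does not embed into X and whenever (y_i) is a normalized weakly null block basis of (x_i) having a spreading model (e_i), then ‖e_1 − e_2‖ = 1. Let 𝓕 be a thin family of finite subsets of ℕ which is large in ℕ. Assume that (x_{E_i})_{i≥1} is weakly null for every sequence E_1 < E_2 < … of members of 𝓕, and that limsup_{n→∞} sup{‖x_E‖ : E ∈ 𝓕, n ≤ min E} = 1. Then there exists an infinite set N = (n_1 < n_2 < …) ⊆ ℕ such that the family 𝓖 = {E_1 ∪ … ∪ E_k : k ∈ ℕ, E_1 < … < E_k, each E_i ∈ 𝓕 with E_i ⊆ N, and min E_1 = n_k} is thin and large in N, and moreover limsup_{n→∞} sup{‖x_E‖ : E ∈ 𝓖, n ≤ min E} = 1. -/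

import Mathlib

open Filter Finset Topology NormedSpace
open scoped NNReal

/-- `e` is a Schauder basis of `X`: every vector has a unique expansion whose partial
sums converge in norm. -/
def IsSchauderBasis {X : Type} [NormedAddCommGroup X] [NormedSpace ℝ X] (e : ℕ → X) : Prop :=
  ∀ x : X, ∃! a : ℕ → ℝ,
    Tendsto (fun n => ∑ i ∈ Finset.range n, a i • e i) atTop (𝓝 x)

/-- A sequence is weakly null if it tends to `0` in the weak topology. -/
def WeaklyNull {X : Type} [NormedAddCommGroup X] [NormedSpace ℝ X] (z : ℕ → X) : Prop :=
  ∀ f : X →L[ℝ] ℝ, Tendsto (fun n => f (z n)) atTop (𝓝 (0 : ℝ))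

/-- `x` is a block basis of `e`: each `x j` is a nonzero vector finitely supported on an
interval of indices, with successive supports strictly increasing. -/
def IsBlockBasis {X : Type} [NormedAddCommGroup X] [NormedSpace ℝ X]
    (e : ℕ → X) (x : ℕ → X) : Prop :=
  ∃ (a : ℕ → ℕ → ℝ) (p q : ℕ → ℕ),
    (∀ j, x j = ∑ i ∈ Finset.Icc (p j) (q j), a j i • e i) ∧
    (∀ j, x j ≠ 0) ∧ (∀ j, p j ≤ q j) ∧ (∀ j, q j < p (j + 1))

/-- `Z` embeds (isomorphically) into `W`. -/
def Embeds (Z W : Type) [NormedAddCommGroup Z] [NormedSpace ℝ Z]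
    [NormedAddCommGroup W] [NormedSpace ℝ W] : Prop :=
  ∃ (T : Z →ₗ[ℝ] W) (c C : ℝ), 0 < c ∧ 0 < C ∧
    ∀ z : Z, c * ‖z‖ ≤ ‖T z‖ ∧ ‖T z‖ ≤ C * ‖z‖

/-- The space `ℓ¹`. -/
noncomputable abbrev ellOne : Type := lp (fun _ : ℕ => ℝ) 1

/-- `e` (in a Banach space `E`) is a spreading model of the sequence `y`. -/
def IsSpreadingModel {X E : Type} [NormedAddCommGroup X] [NormedSpace ℝ X]
    [NormedAddCommGroup E] [NormedSpace ℝ E] (y : ℕ → X) (e : ℕ → E) : Prop :=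
  ∃ ε : ℕ → ℝ, Antitone ε ∧ Tendsto ε atTop (𝓝 (0 : ℝ)) ∧
    ∀ (n : ℕ) (a : ℕ → ℝ), (∀ i < n, |a i| ≤ 1) →
      ∀ k : ℕ → ℕ, StrictMono k → n ≤ k 0 →
        |‖∑ i ∈ Finset.range n, a i • y (k i)‖ - ‖∑ i ∈ Finset.range n, a i • e i‖| ≤ ε n

/-- `F` is an initial segment of the finite set `G`. -/
def IsInitialSegmentOf (F G : Finset ℕ) : Prop := ∃ m : ℕ, F = G.filter (· ≤ m)

/-- A family of finite sets is thin if no member is a proper initial segment of another. -/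
def IsThinFamily (𝓕 : Set (Finset ℕ)) : Prop :=
  ∀ F ∈ 𝓕, ∀ G ∈ 𝓕, IsInitialSegmentOf F G → F = G

/-- `F` is an initial segment of the set `M ⊆ ℕ`. -/
def IsInitialSegmentOfSet (F : Finset ℕ) (M : Set ℕ) : Prop :=
  ∃ m : ℕ, ∀ a : ℕ, a ∈ F ↔ a ∈ M ∧ a ≤ m

/-- The family `𝓕` is large in the infinite set `M`: every infinite subset of `M` has an
initial segment belonging to `𝓕`. -/
def IsLargeIn (𝓕 : Set (Finset ℕ)) (M : Set ℕ) : Prop :=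
  ∀ N : Set ℕ, N ⊆ M → N.Infinite → ∃ F ∈ 𝓕, IsInitialSegmentOfSet F N

/-- `limsup_n sup {‖x_E‖ : E ∈ 𝓕, n ≤ min E} = 1`, stated via its `ε`-characterization
(using that the inner supremum is nonincreasing in `n`). -/
def TailSupNormOne {X : Type} [NormedAddCommGroup X] [NormedSpace ℝ X]
    (x : ℕ → X) (𝓕 : Set (Finset ℕ)) : Prop :=
  (∀ ε : ℝ, 0 < ε → ∃ n : ℕ, ∀ E ∈ 𝓕, (∀ i ∈ E, n ≤ i) → ‖∑ i ∈ E, x i‖ ≤ 1 + ε) ∧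
  (∀ ε : ℝ, 0 < ε → ∀ n : ℕ, ∃ E ∈ 𝓕, (∀ i ∈ E, n ≤ i) ∧ 1 - ε < ‖∑ i ∈ E, x i‖)

/-- The family `𝓖` built from `𝓕` along the subsequence `N`: unions `E₁ ∪ ⋯ ∪ Eₖ` of `k`
successive members of `𝓕` contained in `N` with `min E₁ = N (k-1)` (i.e. the `k`-th element
of `N`). -/
def GFamily (𝓕 : Set (Finset ℕ)) (N : ℕ → ℕ) : Set (Finset ℕ) :=
  {G | ∃ (k : ℕ) (E : ℕ → Finset ℕ), 0 < k ∧
    (∀ i < k, E i ∈ 𝓕 ∧ (E i).Nonempty ∧ ↑(E i) ⊆ Set.range N) ∧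
    (∀ i, i + 1 < k → ∀ a ∈ E i, ∀ b ∈ E (i + 1), a < b) ∧
    N (k - 1) ∈ E 0 ∧ (∀ a ∈ E 0, N (k - 1) ≤ a) ∧
    G = (Finset.range k).biUnion E}

/-!
By the Nash-Williams partition theorem, if every infinite set contains a union `G` of `k` successive
members of `𝓕` with `‖x_G‖ ≤ 1 + ε`, then all such unions inside some infinite set satisfy this
bound. To find one `G`, take successive members `E₀ < E₁ < …` along which the vectors `x_{E_j}` are
weakly null with norms tending to `1`. By the Brunel–Sucheston theorem and the hypothesis on
spreading models, a subsequence has successive differences whose norms again tend to `1`; iterating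
this produces sums of `2 ^ m` of the vectors `x_{E_j}`, with Thue–Morse signs, of norm at most
`1 + ε / 2`. By Ramsey's theorem this bound holds along every subsequence, and by weak nullness
the terms with negative sign can then be moved to where a functional norming the positive part is
negligible. Hence the positive part, a sum over a union of `2 ^ (m - 1)` successive members, and
likewise every subsum of it, has norm at most `1 + ε`.

A diagonal argument imposes these bounds on the tails of one set `N`, with `ε` tending to `0` as the
number of blocks grows. Functionals norming the `x i` give the lower bound
`‖x i‖ - 2 * (1 / 2) ^ i ≤ ‖x_G‖` with `i = min G`, after a further thinning of `N`.
-/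

/-- A property of infinite sets of naturals that can be imposed by refinement: it passes to
subsets, and every infinite set has an infinite subset with the property. -/
structure IsSelectable (P : Set ℕ → Prop) : Prop where
  antitone : ∀ ⦃A B : Set ℕ⦄, B ⊆ A → P A → P B
  exists_subset : ∀ A : Set ℕ, A.Infinite → ∃ B ⊆ A, B.Infinite ∧ P B

/-- The set of naturals above a finite set, so that `↑F ⊆ above E` expresses `E < F`. -/
def above (s : Finset ℕ) : Set ℕ := {n | ∀ a ∈ s, a < n}

theorem infinite_inter_above {M : Set ℕ} (hM : M.Infinite) (s : Finset ℕ) :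
    (M ∩ above s).Infinite := by
  refine (hM.sdiff (Set.finite_Iic (s.sup id))).mono fun n hn => ⟨hn.1, fun a ha => ?_⟩
  exact (Finset.le_sup (f := id) ha).trans_lt (not_le.1 hn.2)

namespace IsSelectable

theorem and {P Q : Set ℕ → Prop} (hP : IsSelectable P) (hQ : IsSelectable Q) :
    IsSelectable fun A => P A ∧ Q A where
  antitone _ _ hBA h := ⟨hP.antitone hBA h.1, hQ.antitone hBA h.2⟩
  exists_subset A hA := by
    obtain ⟨B, hBA, hB, hPB⟩ := hP.exists_subset A hA
    obtain ⟨C, hCB, hC, hQC⟩ := hQ.exists_subset B hB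
    exact ⟨C, hCB.trans hBA, hC, hP.antitone hCB hPB, hQC⟩

theorem forall_mem_of_finite {ι : Type*} {S : Set ι} (hS : S.Finite) {P : ι → Set ℕ → Prop}
    (hP : ∀ i ∈ S, IsSelectable (P i)) : IsSelectable fun A => ∀ i ∈ S, P i A := by
  induction S, hS using Set.Finite.induction_on with
  | empty =>
    exact ⟨fun _ _ _ _ _ hi => hi.elim, fun A hA => ⟨A, subset_rfl, hA, fun _ hi => hi.elim⟩⟩
  | insert _ _ ih =>
    simp only [Set.forall_mem_insert] at hP ⊢
    exact hP.1.and (ih hP.2)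

theorem forall_mem_tail {P : ℕ → Set ℕ → Prop} (hP : ∀ n, IsSelectable (P n)) :
    IsSelectable fun A => ∀ n ∈ A, P n (A ∩ Set.Ioi n) where
  antitone _ _ hBA h n hn := (hP n).antitone (Set.inter_subset_inter_left _ hBA) (h n (hBA hn))
  exists_subset M hM := by
    have step (A : {A : Set ℕ // A.Infinite}) : ∃ B : {B : Set ℕ // B.Infinite},
        B.1 ⊆ A.1 ∩ Set.Ioi (sInf A.1) ∧ P (sInf A.1) B.1 := by
      have hinf : (A.1 ∩ Set.Ioi (sInf A.1)).Infinite := by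
        simpa [above, Set.Ioi] using infinite_inter_above A.2 {sInf A.1}
      obtain ⟨B, hBA, hB, hPB⟩ := (hP (sInf A.1)).exists_subset _ hinf
      exact ⟨⟨B, hB⟩, hBA, hPB⟩
    choose refineSet hsub hrefine using step
    let S (n : ℕ) : {A : Set ℕ // A.Infinite} := refineSet^[n] ⟨M, hM⟩
    have hS (n : ℕ) : S (n + 1) = refineSet (S n) := Function.iterate_succ_apply' ..
    have hanti : Antitone fun n => (S n).1 := antitone_nat_of_succ_le fun n => by
      rw [hS]; exact (hsub _).trans Set.inter_subset_left
    let b (n : ℕ) : ℕ := sInf (S n).1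
    have hbS (n : ℕ) : b n ∈ (S n).1 := Nat.sInf_mem (S n).2.nonempty
    have hb : StrictMono b := strictMono_nat_of_lt_succ fun n => by
      have := hbS (n + 1)
      rw [hS] at this
      exact (hsub _ this).2
    refine ⟨Set.range b, Set.range_subset_iff.2 fun n => hanti n.zero_le (hbS n),
      Set.infinite_range_of_injective hb.injective, ?_⟩
    rintro _ ⟨n, rfl⟩
    refine (hP _).antitone ?_ (hrefine (S n))
    rintro _ ⟨⟨m, rfl⟩, hnm⟩
    rw [← hS]
    exact hanti (hb.lt_iff_lt.1 hnm) (hbS m)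

/-- The fusion principle for infinite sets. -/
theorem forall_finset_above {P : Finset ℕ → Set ℕ → Prop} (hP : ∀ s, IsSelectable (P s)) :
    IsSelectable fun A => ∀ s : Finset ℕ, ↑s ⊆ A → P s (A ∩ above s) where
  antitone _ _ hBA h s hs :=
    (hP s).antitone (Set.inter_subset_inter_left _ hBA) (h s (hs.trans hBA))
  exists_subset M hM := by
    have hbounded (n : ℕ) : IsSelectable fun A => ∀ s ∈ (Finset.Iic n).powerset, P s A :=
      forall_mem_of_finite (Finset.finite_toSet _) fun s _ => hP s
    obtain ⟨B, hBM, hB, hB₀, hBs⟩ := ((hP ∅).and (forall_mem_tail hbounded)).exists_subset M hM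
    refine ⟨B, hBM, hB, fun s hs => ?_⟩
    obtain rfl | hne := s.eq_empty_or_nonempty
    · exact (hP ∅).antitone Set.inter_subset_left hB₀
    · refine (hP s).antitone ?_ (hBs (s.max' hne) (hs (s.max'_mem hne)) s
        (Finset.mem_powerset.2 fun a ha => Finset.mem_Iic.2 (s.le_max' a ha)))
      exact Set.inter_subset_inter_right _ fun n hn => hn _ (s.max'_mem hne)

theorem exists_strictMono_forall_image_Ici {P : ℕ → Set ℕ → Prop}
    (hP : ∀ n, IsSelectable (P n)) {M : Set ℕ} (hM : M.Infinite) :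
    ∃ φ : ℕ → ℕ, StrictMono φ ∧ (∀ n, φ n ∈ M) ∧ ∀ n, P n (φ '' Set.Ici n) := by
  obtain ⟨B, hBM, hB, hPB⟩ :=
    (forall_finset_above fun s : Finset ℕ => hP s.card).exists_subset M hM
  have hφ : StrictMono (Nat.nth (· ∈ B)) := Nat.nth_strictMono hB
  have hmem (n : ℕ) : Nat.nth (· ∈ B) n ∈ B := Nat.nth_mem_of_infinite hB n
  refine ⟨Nat.nth (· ∈ B), hφ, fun n => hBM (hmem n), fun n => ?_⟩
  have hinit := hPB ((Finset.range n).image (Nat.nth (· ∈ B))) (by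
    rw [Finset.coe_image]; exact Set.image_subset_iff.2 fun i _ => hmem i)
  rw [Finset.card_image_of_injective _ hφ.injective, Finset.card_range] at hinit
  refine (hP n).antitone ?_ hinit
  rintro _ ⟨i, hi, rfl⟩
  refine ⟨hmem i, fun a ha => ?_⟩
  obtain ⟨j, hj, rfl⟩ := Finset.mem_image.1 ha
  exact hφ ((Finset.mem_range.1 hj).trans_le hi)

end IsSelectable

section Galvin

/-- `M` accepts `s` (in the sense of Galvin and Prikry) for the property `R` of infinite sets if
`s` followed by any infinite subset of `M` has property `R`. -/
def Accepts (R : Set ℕ → Prop) (s : Finset ℕ) (M : Set ℕ) : Prop :=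
  ∀ L ⊆ M ∩ above s, L.Infinite → R (↑s ∪ L)

/-- `M` rejects `s` if no infinite subset of `M` accepts `s`. -/
def Rejects (R : Set ℕ → Prop) (s : Finset ℕ) (M : Set ℕ) : Prop :=
  ∀ L ⊆ M, L.Infinite → ¬ Accepts R s L

variable {R : Set ℕ → Prop} {s : Finset ℕ} {A B M : Set ℕ}

theorem Accepts.mono (h : Accepts R s A) (hBA : B ∩ above s ⊆ A) : Accepts R s B :=
  fun L hL => h L fun _ hn => ⟨hBA (hL hn), (hL hn).2⟩

theorem Rejects.mono (h : Rejects R s A) (hBA : B ⊆ A) : Rejects R s B :=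
  fun L hL => h L (hL.trans hBA)

theorem isSelectable_accepts_or_rejects (R : Set ℕ → Prop) (s : Finset ℕ) :
    IsSelectable fun A => Accepts R s A ∨ Rejects R s A where
  antitone _ _ hBA := Or.imp (Accepts.mono · (Set.inter_subset_left.trans hBA)) (Rejects.mono · hBA)
  exists_subset A hA := by
    by_cases h : Rejects R s A
    · exact ⟨A, subset_rfl, hA, .inr h⟩
    · simp only [Rejects, not_forall, not_not] at h
      obtain ⟨L, hLA, hL, hacc⟩ := h
      exact ⟨L, hLA, hL, .inl hacc⟩

theorem Accepts.of_forall_insert (hA : ∀ n ∈ A ∩ above s, Accepts R (insert n s) A) :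
    Accepts R s A := by
  intro L hL hinf
  have hmin : sInf L ∈ L := Nat.sInf_mem hinf.nonempty
  have hLn : ↑s ∪ L = ↑(insert (sInf L) s) ∪ (L \ {sInf L}) := by
    rw [Finset.coe_insert, Set.insert_union, ← Set.union_insert, Set.insert_sdiff_singleton,
      Set.insert_eq_of_mem hmin]
  rw [hLn]
  refine hA _ (hL hmin) _ (fun n hn => ⟨(hL hn.1).1, ?_⟩) (hinf.sdiff (Set.finite_singleton _))
  rw [above, Set.mem_ofPred_eq, Finset.forall_mem_insert]
  exact ⟨(Nat.sInf_le hn.1).lt_of_ne' hn.2, (hL hn.1).2⟩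

theorem Accepts.insert (hs : Accepts R s A) {n : ℕ} (hn : n ∈ A ∩ above s) :
    Accepts R (insert n s) A := by
  intro L hL hinf
  rw [Finset.coe_insert, Set.insert_union, ← Set.union_insert]
  refine hs _ (Set.insert_subset hn fun m hm => ⟨(hL hm).1, fun a ha => ?_⟩) (hinf.mono
    (Set.subset_insert n L))
  exact (hL hm).2 a (Finset.mem_insert_of_mem ha)

theorem IsSelectable.accepts_or_rejects_insert (R : Set ℕ → Prop) (s : Finset ℕ) :
    IsSelectable fun A => Accepts R s A ∨ ∀ n ∈ A ∩ above s, Rejects R (insert n s) A where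
  antitone _ _ hBA := Or.imp (Accepts.mono · (Set.inter_subset_left.trans hBA))
    fun h n hn => (h n ⟨hBA hn.1, hn.2⟩).mono hBA
  exists_subset A hA := by
    by_cases hrej : ∃ L ⊆ A, L.Infinite ∧ Accepts R s L
    · obtain ⟨L, hLA, hL, hacc⟩ := hrej
      exact ⟨L, hLA, hL, .inl hacc⟩
    obtain ⟨B, hBA, hB, hdec⟩ := (forall_mem_tail fun n =>
      isSelectable_accepts_or_rejects R (insert n s)).exists_subset A hA
    let T : Set ℕ := {n ∈ B ∩ above s | Accepts R (insert n s) (B ∩ Set.Ioi n)}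
    have hT : T.Finite := by
      by_contra hT
      refine hrej ⟨T, fun n hn => hBA hn.1.1, hT, .of_forall_insert fun n hn => hn.1.2.mono ?_⟩
      exact fun m hm => ⟨hm.1.1.1, hm.2 n (Finset.mem_insert_self n s)⟩
    refine ⟨B \ T, Set.sdiff_subset.trans hBA, hB.sdiff hT, .inr fun n hn L hL hinf hacc => ?_⟩
    refine hn.1.2 ⟨⟨hn.1.1, hn.2⟩, (hdec n hn.1.1).resolve_right fun hrejn => ?_⟩
    refine hrejn (L ∩ above {n}) ?_ (infinite_inter_above hinf _)
      (hacc.mono (Set.inter_subset_left.trans Set.inter_subset_left))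
    exact fun m hm => ⟨(hL hm.1).1, hm.2 n (Finset.mem_singleton_self n)⟩

/-- The property `R` of infinite sets is open in the topology of initial segments. -/
def IsOpenProperty (R : Set ℕ → Prop) : Prop :=
  ∀ L : Set ℕ, R L → ∃ m, ∀ L' : Set ℕ, (∀ a ≤ m, a ∈ L' ↔ a ∈ L) → R L'

theorem IsOpenProperty.exists_accepts (hR : IsOpenProperty R) {L : Set ℕ} (hL : R L)
    (hinf : L.Infinite) : ∃ s : Finset ℕ, ↑s ⊆ L ∧ Accepts R s L := by
  classical
  obtain ⟨m, hm⟩ := hR L hL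
  obtain ⟨n, hnL, hmn⟩ := hinf.exists_gt m
  refine ⟨(Finset.Iic n).filter (· ∈ L), fun a ha => (Finset.mem_filter.1 ha).2,
    fun L' hL' _ => hm _ fun a ha => ?_⟩
  have haL' : a ∉ L' := fun h =>
    (ha.trans hmn.le).not_gt ((hL' h).2 n (by simpa using hnL))
  simp [haL', ha.trans hmn.le]

/-- Galvin's theorem: open properties are Ramsey. -/
theorem IsOpenProperty.isSelectable_homogeneous (hR : IsOpenProperty R) :
    IsSelectable fun A => (∀ L ⊆ A, L.Infinite → R L) ∨ ∀ L ⊆ A, L.Infinite → ¬ R L where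
  antitone _ _ hBA := Or.imp (fun h L hL => h L (hL.trans hBA)) fun h L hL => h L (hL.trans hBA)
  exists_subset M hM := by
    obtain ⟨A, hAM, hA, hdec⟩ := (IsSelectable.forall_finset_above
      (IsSelectable.accepts_or_rejects_insert R)).exists_subset M hM
    by_cases hacc : Accepts R ∅ A
    · refine ⟨A, hAM, hA, .inl fun L hL hinf => ?_⟩
      simpa using hacc L (fun n hn => ⟨hL hn, by simp [above]⟩) hinf
    have hrej (s : Finset ℕ) (hs : ↑s ⊆ A) (hnacc : ¬ Accepts R s A) (n : ℕ)
        (hn : n ∈ A ∩ above s) : Rejects R (insert n s) (A ∩ above s) :=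
      (hdec s hs).resolve_left (fun h => hnacc (h.mono subset_rfl)) n ⟨hn, hn.2⟩
    have hnacc (s : Finset ℕ) : ↑s ⊆ A → ¬ Accepts R s A := by
      induction s using Finset.induction_on_max with
      | empty => exact fun _ => hacc
      | insert n s hn ih =>
        intro hs hns
        rw [Finset.coe_insert, Set.insert_subset_iff] at hs
        exact hrej s hs.2 (ih hs.2) n ⟨hs.1, hn⟩ _ subset_rfl (infinite_inter_above hA s)
          (hns.mono (Set.inter_subset_left.trans Set.inter_subset_left))
    refine ⟨A, hAM, hA, .inr fun L hL hinf hRL => ?_⟩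
    obtain ⟨s, hsL, hs⟩ := hR.exists_accepts hRL hinf
    obtain ⟨n, hn⟩ := (infinite_inter_above hinf s).nonempty
    exact hrej s (hsL.trans hL) (hnacc s (hsL.trans hL)) n ⟨hL hn.1, hn.2⟩ (L ∩ above s)
      (Set.inter_subset_inter_left _ hL) (infinite_inter_above hinf s)
      ((hs.insert hn).mono (Set.inter_subset_left.trans Set.inter_subset_left))

end Galvin

section NashWilliams

variable {𝓗 : Set (Finset ℕ)}

theorem IsInitialSegmentOfSet.subset {G : Finset ℕ} {L : Set ℕ} (h : IsInitialSegmentOfSet G L) :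
    ↑G ⊆ L := fun _ ha => (h.choose_spec _ |>.1 ha).1

/-- The `0` matters only for `G = ∅`, which is not an initial segment of a set containing `0`. -/
theorem isInitialSegmentOfSet_union {G : Finset ℕ} {A : Set ℕ} (hA : A ⊆ above (insert 0 G)) :
    IsInitialSegmentOfSet G (↑G ∪ A) := by
  refine ⟨G.sup id, fun a => ⟨fun ha => ⟨.inl ha, Finset.le_sup (f := id) ha⟩, ?_⟩⟩
  rintro ⟨ha | ha, hle⟩
  · exact ha
  · have hpos : 0 < a := hA ha 0 (Finset.mem_insert_self 0 G)
    exact absurd hle ((Finset.sup_lt_iff hpos).2 fun b hb =>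
      hA ha b (Finset.mem_insert_of_mem hb)).not_ge

theorem IsThinFamily.eq_of_isInitialSegmentOfSet (h𝓗 : IsThinFamily 𝓗) {F G : Finset ℕ}
    (hF : F ∈ 𝓗) (hG : G ∈ 𝓗) {L : Set ℕ} (hFL : IsInitialSegmentOfSet F L)
    (hGL : IsInitialSegmentOfSet G L) : F = G := by
  obtain ⟨m, hm⟩ := hFL
  obtain ⟨n, hn⟩ := hGL
  wlog hmn : m ≤ n generalizing F G m n
  · exact (this hG hF n hn m hm (le_of_not_ge hmn)).symm
  refine h𝓗 F hF G hG ⟨m, Finset.ext fun a => ?_⟩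
  rw [Finset.mem_filter, hm, hn, and_assoc]
  exact and_congr_right fun _ => ⟨fun h => ⟨h.trans hmn, h⟩, And.right⟩

/-- The Nash-Williams theorem for two colours. -/
theorem IsThinFamily.isSelectable_homogeneous (h𝓗 : IsThinFamily 𝓗) (c : Finset ℕ → Prop) :
    IsSelectable fun A => (∀ G ∈ 𝓗, ↑G ⊆ A → c G) ∨ ∀ G ∈ 𝓗, ↑G ⊆ A → ¬ c G where
  antitone _ _ hBA := Or.imp (fun h G hG hGB => h G hG (hGB.trans hBA))
    fun h G hG hGB => h G hG (hGB.trans hBA)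
  exists_subset M hM := by
    have hopen : IsOpenProperty fun L => ∃ G ∈ 𝓗, IsInitialSegmentOfSet G L ∧ c G := by
      rintro L ⟨G, hG, ⟨m, hm⟩, hc⟩
      refine ⟨m, fun L' hL' => ⟨G, hG, ⟨m, fun a => (hm a).trans ?_⟩, hc⟩⟩
      exact and_congr_left fun ha => (hL' a ha).symm
    obtain ⟨A, hAM, hA, hhom⟩ := hopen.isSelectable_homogeneous.exists_subset M hM
    have hinit (G : Finset ℕ) : IsInitialSegmentOfSet G (↑G ∪ A ∩ above (insert 0 G)) :=
      isInitialSegmentOfSet_union Set.inter_subset_right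
    have hinf (G : Finset ℕ) : (↑G ∪ A ∩ above (insert 0 G) : Set ℕ).Infinite :=
      (infinite_inter_above hA _).mono Set.subset_union_right
    refine ⟨A, hAM, hA, hhom.imp (fun h G hG hGA => ?_) fun h G hG hGA hc => ?_⟩
    · obtain ⟨F, hF, hFL, hcF⟩ := h _ (Set.union_subset hGA Set.inter_subset_left) (hinf G)
      exact h𝓗.eq_of_isInitialSegmentOfSet hF hG hFL (hinit G) ▸ hcF
    · exact h _ (Set.union_subset hGA Set.inter_subset_left) (hinf G) ⟨G, hG, hinit G, hc⟩

end NashWilliams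

section Ramsey

theorem isThinFamily_setOf_card_eq (n : ℕ) : IsThinFamily {s | s.card = n} := by
  rintro F hF G hG ⟨m, rfl⟩
  exact Finset.eq_of_subset_of_card_le (Finset.filter_subset _ _) (hG.trans hF.symm).le

theorem eqOn_of_image_range_eq {k k' : ℕ → ℕ} (hk : StrictMono k) (hk' : StrictMono k')
    {n : ℕ} (h : (Finset.range n).image k = (Finset.range n).image k') :
    Set.EqOn k k' (Set.Iio n) := by
  have hrange (j : ℕ → ℕ) : Set.range (j ∘ Fin.val : Fin n → ℕ) = (Finset.range n).image j := by
    ext a; simp [Fin.exists_iff]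
  have hcomp : k ∘ Fin.val = (k' ∘ Fin.val : Fin n → ℕ) :=
    ((hk.comp Fin.val_strictMono).range_inj (hk'.comp Fin.val_strictMono)).1
      (by rw [hrange, hrange, h])
  exact fun i hi => congrFun hcomp ⟨i, hi⟩

/-- The increasing sequences in `A`; their first `n` terms are the increasing `n`-tuples in `A`. -/
def increasingIn (A : Set ℕ) : Set (ℕ → ℕ) := {k | StrictMono k ∧ ∀ i, k i ∈ A}

theorem increasingIn_mono {A B : Set ℕ} (h : B ⊆ A) : increasingIn B ⊆ increasingIn A :=
  fun _ hk => ⟨hk.1, fun i => h (hk.2 i)⟩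

variable {n : ℕ}

theorem isSelectable_forall_or_forall_not {R : (ℕ → ℕ) → Prop} (hR : DependsOn R (Set.Iio n)) :
    IsSelectable fun A => (∀ k ∈ increasingIn A, R k) ∨ ∀ k ∈ increasingIn A, ¬ R k where
  antitone _ _ hBA := Or.imp (fun h k hk => h k (increasingIn_mono hBA hk))
    fun h k hk => h k (increasingIn_mono hBA hk)
  exists_subset M hM := by
    let c (G : Finset ℕ) : Prop := ∃ k, StrictMono k ∧ (Finset.range n).image k = G ∧ R k
    have hc {k : ℕ → ℕ} (hk : StrictMono k) : c ((Finset.range n).image k) ↔ R k := by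
      refine ⟨?_, fun h => ⟨k, hk, rfl, h⟩⟩
      rintro ⟨k', hk', heq, h⟩
      exact (hR (eqOn_of_image_range_eq hk' hk heq)).mp h
    have hmem {k : ℕ → ℕ} (hk : StrictMono k) :
        (Finset.range n).image k ∈ {s : Finset ℕ | s.card = n} := by
      simp [Finset.card_image_of_injective _ hk.injective]
    obtain ⟨A, hAM, hA, h⟩ :=
      ((isThinFamily_setOf_card_eq n).isSelectable_homogeneous c).exists_subset M hM
    have hsub {k : ℕ → ℕ} (hk : ∀ i, k i ∈ A) : ↑((Finset.range n).image k) ⊆ A := by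
      rw [Finset.coe_image]
      exact Set.image_subset_iff.2 fun i _ => hk i
    exact ⟨A, hAM, hA, h.imp (fun h k hk => (hc hk.1).1 (h _ (hmem hk.1) (hsub hk.2)))
      fun h k hk => mt (hc hk.1).2 (h _ (hmem hk.1) (hsub hk.2))⟩

theorem isSelectable_forall_eq {κ : Type*} {c : (ℕ → ℕ) → κ} (hc : DependsOn c (Set.Iio n))
    (hfin : (Set.range c).Finite) :
    IsSelectable fun A => ∀ k ∈ increasingIn A, ∀ k' ∈ increasingIn A, c k = c k' where
  antitone _ _ hBA h k hk k' hk' := h k (increasingIn_mono hBA hk) k' (increasingIn_mono hBA hk')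
  exists_subset M hM := by
    obtain ⟨A, hAM, hA, h⟩ := (IsSelectable.forall_mem_of_finite hfin fun q _ =>
      isSelectable_forall_or_forall_not (R := fun k => c k = q)
        fun _ _ hkk' => congrArg (· = q) (hc hkk')).exists_subset M hM
    refine ⟨A, hAM, hA, fun k hk k' hk' => ?_⟩
    exact ((h (c k) ⟨k, rfl⟩).resolve_right (fun hne => hne k hk rfl) k' hk').symm

theorem isSelectable_forall_abs_sub_le {f : (ℕ → ℕ) → ℝ} (hf : DependsOn f (Set.Iio n)) {C : ℝ}
    (hC : ∀ k, |f k| ≤ C) {δ : ℝ} (hδ : 0 < δ) :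
    IsSelectable fun A => ∀ k ∈ increasingIn A, ∀ k' ∈ increasingIn A, |f k - f k'| ≤ δ where
  antitone _ _ hBA h k hk k' hk' := h k (increasingIn_mono hBA hk) k' (increasingIn_mono hBA hk')
  exists_subset M hM := by
    have hfin : (Set.range fun k => ⌊f k / δ⌋).Finite := by
      refine (Set.finite_Icc ⌊-C / δ⌋ ⌊C / δ⌋).subset (Set.range_subset_iff.2 fun k => ?_)
      have := abs_le.1 (hC k)
      exact ⟨by gcongr; exact this.1, by gcongr; exact this.2⟩
    obtain ⟨A, hAM, hA, h⟩ := (isSelectable_forall_eq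
      (fun _ _ hkk' => congrArg (⌊· / δ⌋) (hf hkk')) hfin).exists_subset M hM
    refine ⟨A, hAM, hA, fun k hk k' hk' => ?_⟩
    have := Int.abs_sub_lt_one_of_floor_eq_floor (h k hk k' hk')
    rw [← sub_div, abs_div, abs_of_pos hδ, div_lt_one hδ] at this
    exact this.le

end Ramsey

section BrunelSucheston

theorem exists_finite_net_unit_cube (n : ℕ) {η : ℝ} (hη : 0 < η) :
    ∃ T : Set (ℕ → ℝ), T.Finite ∧
      ∀ a : ℕ → ℝ, (∀ i < n, |a i| ≤ 1) → ∃ b ∈ T, ∀ i < n, |a i - b i| ≤ η := by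
  obtain ⟨t, -, htfin, hcover⟩ := (isCompact_closedBall (0 : Fin n → ℝ) 1).finite_cover_balls hη
  let extendByZero (b : Fin n → ℝ) (i : ℕ) : ℝ := if h : i < n then b ⟨i, h⟩ else 0
  refine ⟨extendByZero '' t, htfin.image _, fun a ha => ?_⟩
  have hball : (fun i : Fin n => a i) ∈ Metric.closedBall 0 1 := by
    rw [mem_closedBall_zero_iff, pi_norm_le_iff_of_nonneg zero_le_one]
    exact fun i => ha i i.2
  obtain ⟨b, hbt, hb⟩ := Set.mem_iUnion₂.1 (hcover hball)
  refine ⟨extendByZero b, ⟨b, hbt, rfl⟩, fun i hi => ?_⟩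
  simpa [extendByZero, hi, Real.dist_eq] using (dist_le_pi_dist _ b ⟨i, hi⟩).trans hb.le

variable {X : Type*} [NormedAddCommGroup X] [NormedSpace ℝ X] {y : ℕ → X} {C : ℝ}

theorem norm_sum_smul_le (hC : ∀ j, ‖y j‖ ≤ C) (s : Finset ℕ) (a : ℕ → ℝ) (k : ℕ → ℕ) :
    ‖∑ i ∈ s, a i • y (k i)‖ ≤ ∑ i ∈ s, |a i| * C :=
  norm_sum_le_of_le s fun i _ => by
    rw [norm_smul, Real.norm_eq_abs]; gcongr; exact hC _

theorem isSelectable_forall_coeff_abs_norm_sub_le (hC : ∀ j, ‖y j‖ ≤ C) (n : ℕ) {δ : ℝ}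
    (hδ : 0 < δ) : IsSelectable fun A => ∀ a : ℕ → ℝ, (∀ i < n, |a i| ≤ 1) →
      ∀ k ∈ increasingIn A, ∀ k' ∈ increasingIn A,
        |‖∑ i ∈ Finset.range n, a i • y (k i)‖ - ‖∑ i ∈ Finset.range n, a i • y (k' i)‖| ≤ δ where
  antitone _ _ hBA h a ha k hk k' hk' :=
    h a ha k (increasingIn_mono hBA hk) k' (increasingIn_mono hBA hk')
  exists_subset M hM := by
    let N (a : ℕ → ℝ) (k : ℕ → ℕ) : ℝ := ‖∑ i ∈ Finset.range n, a i • y (k i)‖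
    have hC₀ : 0 ≤ C := (norm_nonneg _).trans (hC 0)
    obtain ⟨η, hη, hηδ⟩ := exists_pos_mul_lt (show 0 < δ / 3 by positivity) (n * C)
    obtain ⟨T, hT, hnet⟩ := exists_finite_net_unit_cube n hη
    have hdep (a : ℕ → ℝ) : DependsOn (N a) (Set.Iio n) := fun k k' hkk' =>
      congrArg norm (Finset.sum_congr rfl fun i hi => by rw [hkk' i (Finset.mem_range.1 hi)])
    have hbdd (a : ℕ → ℝ) (k : ℕ → ℕ) : |N a k| ≤ ∑ i ∈ Finset.range n, |a i| * C :=
      (abs_norm _).trans_le (norm_sum_smul_le hC _ a k)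
    obtain ⟨A, hAM, hA, hosc⟩ := (IsSelectable.forall_mem_of_finite hT fun b _ =>
      isSelectable_forall_abs_sub_le (hdep b) (hbdd b)
        (show 0 < δ / 3 by positivity)).exists_subset M hM
    refine ⟨A, hAM, hA, fun a ha k hk k' hk' => ?_⟩
    obtain ⟨b, hbT, hab⟩ := hnet a ha
    have happrox (k : ℕ → ℕ) : |N a k - N b k| ≤ δ / 3 := by
      refine (abs_norm_sub_norm_le _ _).trans ?_
      simp_rw [← Finset.sum_sub_distrib, ← sub_smul]
      refine (norm_sum_smul_le hC _ (fun i => a i - b i) k).trans ?_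
      calc ∑ i ∈ Finset.range n, |a i - b i| * C ≤ ∑ _ ∈ Finset.range n, η * C := by
            gcongr with i hi; exact hab i (Finset.mem_range.1 hi)
        _ = n * C * η := by rw [Finset.sum_const, Finset.card_range, nsmul_eq_mul]; ring
        _ ≤ δ / 3 := hηδ.le
    calc |N a k - N a k'| = |(N a k - N b k) + (N b k - N b k') + (N b k' - N a k')| := by ring_nf
      _ ≤ |N a k - N b k| + |N b k - N b k'| + |N b k' - N a k'| := abs_add_three ..
      _ ≤ δ / 3 + δ / 3 + δ / 3 := by
          gcongr
          exacts [happrox k, hosc b hbT k hk k' hk', abs_sub_comm (N b k') _ ▸ happrox k']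
      _ = δ := by ring

theorem exists_subsequence_asymptotically_stable (hC : ∀ j, ‖y j‖ ≤ C) :
    ∃ φ : ℕ → ℕ, StrictMono φ ∧ ∀ (n : ℕ) (a : ℕ → ℝ), (∀ i < n, |a i| ≤ 1) →
      ∀ k ∈ increasingIn (Set.Ici n), ∀ k' ∈ increasingIn (Set.Ici n),
        |‖∑ i ∈ Finset.range n, a i • y (φ (k i))‖ -
          ‖∑ i ∈ Finset.range n, a i • y (φ (k' i))‖| ≤ 1 / ((n : ℝ) + 1) := by
  obtain ⟨φ, hφ, -, h⟩ := IsSelectable.exists_strictMono_forall_image_Ici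
    (fun n => isSelectable_forall_coeff_abs_norm_sub_le hC n Nat.one_div_pos_of_nat)
    Set.infinite_univ
  exact ⟨φ, hφ, fun n a ha k hk k' hk' => h n a ha
    (φ ∘ k) ⟨hφ.comp hk.1, fun i => ⟨k i, hk.2 i, rfl⟩⟩
    (φ ∘ k') ⟨hφ.comp hk'.1, fun i => ⟨k' i, hk'.2 i, rfl⟩⟩⟩

theorem exists_tendsto_hyperfilter {u : ℕ → ℝ} {D : ℝ} (hu : ∀ t, |u t| ≤ D) :
    ∃ l, Tendsto u (hyperfilter ℕ) (𝓝 l) := by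
  obtain ⟨l, -, hl⟩ := (isCompact_Icc (a := -D) (b := D)).ultrafilter_le_nhds
    ((hyperfilter ℕ).map u) (le_principal_iff.2 (mem_map.2 (univ_mem' fun t => abs_le.1 (hu t))))
  exact ⟨l, hl⟩

theorem exists_seminorm_tendsto_hyperfilter {V : Type*} [AddCommGroup V] [Module ℝ V]
    {T : ℕ → V →ₗ[ℝ] X} (hT : ∀ v, ∃ D, ∀ t, ‖T t v‖ ≤ D) :
    ∃ p : Seminorm ℝ V, ∀ v, Tendsto (fun t => ‖T t v‖) (hyperfilter ℕ) (𝓝 (p v)) := by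
  have hlim (v : V) : ∃ l, Tendsto (fun t => ‖T t v‖) (hyperfilter ℕ) (𝓝 l) := by
    obtain ⟨D, hD⟩ := hT v
    exact exists_tendsto_hyperfilter fun t => (abs_norm _).trans_le (hD t)
  choose q hq using hlim
  refine ⟨Seminorm.of q (fun v w => ?_) fun c v => ?_, hq⟩
  · refine le_of_tendsto_of_tendsto' (hq (v + w)) ((hq v).add (hq w)) fun t => ?_
    rw [map_add]
    exact norm_add_le _ _
  · refine tendsto_nhds_unique (hq (c • v)) ?_
    simp only [map_smul, norm_smul]
    exact (hq v).const_mul _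

theorem exists_banach_norm_eq_seminorm.{u} {V : Type u} [AddCommGroup V] [Module ℝ V]
    (p : Seminorm ℝ V) :
    ∃ (E : Type u) (_ : NormedAddCommGroup E) (_ : NormedSpace ℝ E) (_ : CompleteSpace E)
      (J : V →ₗ[ℝ] E), ∀ v, ‖J v‖ = p v := by
  let _ : SeminormedAddCommGroup V := p.toAddGroupSeminorm.toSeminormedAddCommGroup
  let _ : NormedSpace ℝ V := ⟨fun c v => (map_smul_eq_mul p c v).le⟩
  exact ⟨UniformSpace.Completion V, inferInstance, inferInstance, inferInstance,
    (UniformSpace.Completion.toComplₗᵢ (𝕜 := ℝ) (E := V)).toLinearMap,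
    UniformSpace.Completion.norm_coe⟩

/-- The Brunel–Sucheston theorem. The norm of the spreading model is the limit of
`‖∑ aᵢ y (φ (t + i))‖` along an ultrafilter `t → ∞`, which is defined for all coefficients. -/
theorem exists_subsequence_isSpreadingModel {X : Type} [NormedAddCommGroup X] [NormedSpace ℝ X]
    {y : ℕ → X} (hC : ∀ j, ‖y j‖ ≤ C) :
    ∃ φ : ℕ → ℕ, StrictMono φ ∧ ∃ (E : Type) (_ : NormedAddCommGroup E) (_ : NormedSpace ℝ E)
      (_ : CompleteSpace E) (e : ℕ → E), IsSpreadingModel (y ∘ φ) e := by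
  obtain ⟨φ, hφ, hstable⟩ := exists_subsequence_asymptotically_stable hC
  obtain ⟨p, hp⟩ := exists_seminorm_tendsto_hyperfilter
    (T := fun t => Finsupp.linearCombination ℝ fun i => y (φ (t + i)))
    fun v => ⟨_, fun t => norm_sum_smul_le hC v.support v fun i => φ (t + i)⟩
  obtain ⟨E, i₁, i₂, i₃, J, hJ⟩ := exists_banach_norm_eq_seminorm p
  refine ⟨φ, hφ, E, i₁, i₂, i₃, fun i => J (Finsupp.single i 1), fun n => 1 / ((n : ℝ) + 1),
    fun m n hmn => Nat.one_div_le_one_div hmn, tendsto_one_div_add_atTop_nhds_zero_nat,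
    fun n a ha k hk hn => ?_⟩
  have hlim := hp (∑ i ∈ Finset.range n, a i • Finsupp.single i 1)
  rw [← hJ] at hlim
  simp only [map_sum, map_smul, Finsupp.linearCombination_single, one_smul] at hlim
  refine le_of_tendsto ((tendsto_const_nhds.sub hlim).abs)
    (((eventually_ge_atTop n).filter_mono Nat.hyperfilter_le_atTop).mono fun t ht => ?_)
  exact hstable n a ha k ⟨hk, fun i => hn.trans (hk.monotone i.zero_le)⟩ (t + ·)
    ⟨fun _ _ hij => Nat.add_lt_add_left hij t, fun i => ht.trans (Nat.le_add_right t i)⟩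

end BrunelSucheston

section Suppression

variable {X : Type} [NormedAddCommGroup X] [NormedSpace ℝ X] {w : ℕ → X}

theorem WeaklyNull.comp (hw : WeaklyNull w) {φ : ℕ → ℕ} (hφ : StrictMono φ) :
    WeaklyNull (w ∘ φ) := fun f => (hw f).comp hφ.tendsto_atTop

theorem WeaklyNull.sub {z : ℕ → X} (hw : WeaklyNull w) (hz : WeaklyNull z) :
    WeaklyNull (w - z) := fun f => by
  simpa using (hw f).sub (hz f)

theorem WeaklyNull.smul_of_tendsto (hw : WeaklyNull w) {c : ℕ → ℝ} {l : ℝ}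
    (hc : Tendsto c atTop (𝓝 l)) : WeaklyNull fun j => c j • w j := fun f => by
  simpa using hc.mul (hw f)

/-- By Banach–Alaoglu, a weakly null sequence becomes small somewhere on a single interval of
indices, uniformly over the functionals of the dual ball. -/
theorem WeaklyNull.exists_forall_exists_mem_Ico (hw : WeaklyNull w) {δ : ℝ} (hδ : 0 < δ) (n : ℕ) :
    ∃ n' > n, ∀ f : X →L[ℝ] ℝ, ‖f‖ ≤ 1 → ∃ m ∈ Set.Ico n n', |f (w m)| < δ := by
  let U (l : ℕ) : Set (WeakDual ℝ X) := {f | ∃ m ∈ Set.Ico n (n + l), |f (w m)| < δ}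
  have hopen (l : ℕ) : IsOpen (U l) := by
    have : U l = ⋃ m ∈ Set.Ico n (n + l), {f | |f (w m)| < δ} := by ext; simp [U]
    rw [this]
    exact isOpen_biUnion fun m _ =>
      isOpen_lt (WeakDual.eval_continuous (w m)).abs continuous_const
  have hcover (f : WeakDual ℝ X) : ∃ l, f ∈ U l := by
    obtain ⟨m, hm, hnm⟩ := (((hw f).abs.eventually_lt_const (by simpa using hδ)).and
      (eventually_ge_atTop n)).exists
    exact ⟨m + 1, m, ⟨hnm, by lia⟩, hm⟩
  have hmono : Monotone U := fun _ _ hll' _ ⟨m, hm, hlt⟩ =>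
    ⟨m, Set.Ico_subset_Ico_right (by lia) hm, hlt⟩
  have hcompact := WeakDual.isCompact_closedBall (𝕜 := ℝ) (0 : StrongDual ℝ X) 1
  obtain ⟨l, hl⟩ := hcompact.elim_directed_cover U hopen
    (fun f _ => Set.mem_iUnion.2 (hcover f)) hmono.directed_le
  refine ⟨n + l + 1, by lia, fun f hf => ?_⟩
  obtain ⟨m, hm, hlt⟩ := hl (show StrongDual.toWeakDual f ∈ _ by simpa using hf)
  exact ⟨m, Set.Ico_subset_Ico_right (by lia) hm, hlt⟩

theorem WeaklyNull.exists_strictMono_forall_exists_mem_Ico (hw : WeaklyNull w) {δ : ℝ}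
    (hδ : 0 < δ) : ∃ u : ℕ → ℕ, StrictMono u ∧
      ∀ i, ∀ f : X →L[ℝ] ℝ, ‖f‖ ≤ 1 → ∃ m ∈ Set.Ico (u i) (u (i + 1)), |f (w m)| < δ := by
  choose next hnext hsmall using hw.exists_forall_exists_mem_Ico hδ
  have hsucc (i : ℕ) : next^[i + 1] 0 = next (next^[i] 0) := Function.iterate_succ_apply' ..
  exact ⟨fun i => next^[i] 0, strictMono_nat_of_lt_succ fun i => hsucc i ▸ hnext _,
    fun i => by simpa only [hsucc] using hsmall (next^[i] 0)⟩

/-- Terms of `∑ aᵢ w (k i)` may be dropped at almost no cost: a functional norming the remaining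
sum is almost annihilated by a suitable choice of the dropped vectors. -/
theorem WeaklyNull.exists_strictMono_norm_sum_subset_le (hw : WeaklyNull w) {K : ℕ} {a : ℕ → ℝ}
    {c : ℝ} (hc : ∀ k : ℕ → ℕ, StrictMono k → ‖∑ i ∈ Finset.range K, a i • w (k i)‖ ≤ c) {ε : ℝ}
    (hε : 0 < ε) :
    ∃ u : ℕ → ℕ, StrictMono u ∧ ∀ S ⊆ Finset.range K, ‖∑ i ∈ S, a i • w (u i)‖ ≤ c + ε := by
  obtain ⟨δ, hδ, hδε⟩ := exists_pos_mul_lt hε (∑ i ∈ Finset.range K, |a i|)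
  obtain ⟨u, hu, hsmall⟩ := hw.exists_strictMono_forall_exists_mem_Ico hδ
  refine ⟨u, hu, fun S hS => ?_⟩
  obtain ⟨f, hf, hnorming⟩ := exists_dual_vector'' ℝ (∑ i ∈ S, a i • w (u i))
  have hchoice (i : ℕ) : ∃ m ∈ Set.Ico (u i) (u (i + 1)),
      (i ∈ S → m = u i) ∧ (i ∉ S → |f (w m)| < δ) := by
    by_cases hi : i ∈ S
    · exact ⟨u i, Set.left_mem_Ico.2 (hu i.lt_succ_self), fun _ => rfl, absurd hi⟩
    · obtain ⟨m, hm, hlt⟩ := hsmall i f hf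
      exact ⟨m, hm, fun h => absurd h hi, fun _ => hlt⟩
  choose k hk hkS hkS' using hchoice
  have hkmono : StrictMono k :=
    strictMono_nat_of_lt_succ fun i => (hk i).2.trans_le (hk (i + 1)).1
  have hdropped : |∑ i ∈ Finset.range K \ S, a i * f (w (k i))| ≤ ε :=
    calc |∑ i ∈ Finset.range K \ S, a i * f (w (k i))|
        ≤ ∑ i ∈ Finset.range K \ S, |a i| * δ := by
          refine (abs_sum_le_sum_abs _ _).trans (Finset.sum_le_sum fun i hi => ?_)
          rw [abs_mul]
          gcongr
          exact (hkS' i (Finset.mem_sdiff.1 hi).2).le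
      _ ≤ ∑ i ∈ Finset.range K, |a i| * δ :=
          Finset.sum_le_sum_of_subset_of_nonneg Finset.sdiff_subset fun _ _ _ => by positivity
      _ ≤ ε := by rw [← Finset.sum_mul]; exact hδε.le
  calc ‖∑ i ∈ S, a i • w (u i)‖
      = ∑ i ∈ S, a i * f (w (k i)) := by
        rw [show ‖_‖ = f _ from hnorming.symm, map_sum]
        exact Finset.sum_congr rfl fun i hi => by rw [hkS i hi, map_smul, smul_eq_mul]
    _ = f (∑ i ∈ Finset.range K, a i • w (k i)) - ∑ i ∈ Finset.range K \ S, a i * f (w (k i)) := by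
        simp only [map_sum, map_smul, smul_eq_mul]
        rw [eq_sub_iff_add_eq', Finset.sum_sdiff hS]
    _ ≤ c + ε := by
        rw [sub_eq_add_neg]
        gcongr
        · exact (f.le_of_opNorm_le hf _).trans (by simpa using hc k hkmono) |> (le_abs_self _).trans
        · exact (neg_le_abs _).trans hdropped

end Suppression

section BlockSequences

variable {X : Type} [NormedAddCommGroup X] [NormedSpace ℝ X] {x y : ℕ → X}

/-- The sequence `y` lives on successive intervals of `x`; unlike in `IsBlockBasis`, zero vectors
are allowed. -/
def IsBlockSequence (x y : ℕ → X) : Prop :=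
  ∃ p : ℕ → ℕ, StrictMono p ∧ ∀ j, y j ∈ Submodule.span ℝ (x '' Set.Ico (p j) (p (j + 1)))

namespace IsBlockSequence

theorem comp (hy : IsBlockSequence x y) {φ : ℕ → ℕ} (hφ : StrictMono φ) :
    IsBlockSequence x (y ∘ φ) := by
  obtain ⟨p, hp, hspan⟩ := hy
  refine ⟨p ∘ φ, hp.comp hφ, fun j => Submodule.span_mono (Set.image_mono ?_) (hspan (φ j))⟩
  exact Set.Ico_subset_Ico_right (hp.monotone (hφ j.lt_succ_self))

theorem smul (hy : IsBlockSequence x y) (c : ℕ → ℝ) : IsBlockSequence x fun j => c j • y j :=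
  let ⟨p, hp, hspan⟩ := hy
  ⟨p, hp, fun j => Submodule.smul_mem _ _ (hspan j)⟩

theorem sub_pairs (hy : IsBlockSequence x y) :
    IsBlockSequence x fun j => y (2 * j) - y (2 * j + 1) := by
  obtain ⟨p, hp, hspan⟩ := hy
  refine ⟨fun j => p (2 * j), fun i j hij => hp (by lia), fun j => Submodule.sub_mem _ ?_ ?_⟩
  · refine Submodule.span_mono (Set.image_mono ?_) (hspan (2 * j))
    exact Set.Ico_subset_Ico_right (hp.monotone (by lia))
  · refine Submodule.span_mono (Set.image_mono ?_) (hspan (2 * j + 1))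
    exact Set.Ico_subset_Ico (hp.monotone (by lia)) (hp.monotone (by lia))

theorem isBlockBasis (hy : IsBlockSequence x y) (hne : ∀ j, y j ≠ 0) : IsBlockBasis x y := by
  obtain ⟨p, hp, hspan⟩ := hy
  have hlt (j : ℕ) : p j < p (j + 1) := hp j.lt_succ_self
  have hexpand (j : ℕ) :
      ∃ a : ℕ → ℝ, y j = ∑ i ∈ Finset.Icc (p j) (p (j + 1) - 1), a i • x i := by
    have hIcc : (Finset.Icc (p j) (p (j + 1) - 1) : Set ℕ) = Set.Ico (p j) (p (j + 1)) := by
      ext i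
      have := hlt j
      simp only [Finset.coe_Icc, Set.mem_Icc, Set.mem_Ico]
      lia
    obtain ⟨a, ha⟩ := (Submodule.mem_span_image_finset_iff_exists_fun' ℝ).1 (hIcc ▸ hspan j)
    exact ⟨a, ha.symm⟩
  choose a ha using hexpand
  exact ⟨a, p, fun j => p (j + 1) - 1, ha, hne, fun j => Nat.le_sub_one_of_lt (hlt j),
    fun j => Nat.sub_one_lt_of_lt (hlt j)⟩

end IsBlockSequence

/-- A weakly null block sequence whose norms tend to `1`. -/
structure IsAsymptoticBlock (x y : ℕ → X) : Prop where
  block : IsBlockSequence x y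
  norm_tendsto : Tendsto (fun j => ‖y j‖) atTop (𝓝 1)
  weaklyNull : WeaklyNull y

theorem IsAsymptoticBlock.comp (hy : IsAsymptoticBlock x y) {φ : ℕ → ℕ} (hφ : StrictMono φ) :
    IsAsymptoticBlock x (y ∘ φ) :=
  ⟨hy.block.comp hφ, hy.norm_tendsto.comp hφ.tendsto_atTop, hy.weaklyNull.comp hφ⟩

/-- The hypothesis on spreading models: `‖e₀ - e₁‖ = 1` for each spreading model `e` of a normalized
weakly null block basis of `x`. -/
def HasUnitSpreadingDifferences (x : ℕ → X) : Prop :=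
  ∀ (E : Type) [NormedAddCommGroup E] [NormedSpace ℝ E] [CompleteSpace E] (y : ℕ → X) (e : ℕ → E),
    IsBlockBasis x y → (∀ j, ‖y j‖ = 1) → WeaklyNull y → IsSpreadingModel y e → ‖e 0 - e 1‖ = 1

theorem IsSpreadingModel.tendsto_norm_sub_pairs {E : Type} [NormedAddCommGroup E]
    [NormedSpace ℝ E] {e : ℕ → E} (he : IsSpreadingModel y e) :
    Tendsto (fun j => ‖y (2 * j) - y (2 * j + 1)‖) atTop (𝓝 ‖e 0 - e 1‖) := by
  obtain ⟨ε, -, hε, hclose⟩ := he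
  have h2 : Tendsto (fun j : ℕ => 2 * j) atTop atTop :=
    (strictMono_mul_left_of_pos two_pos).tendsto_atTop
  rw [tendsto_iff_norm_sub_tendsto_zero]
  refine squeeze_zero' (.of_forall fun _ => norm_nonneg _) ?_ (hε.comp h2)
  filter_upwards [eventually_ge_atTop 1] with j hj
  let a : ℕ → ℝ := Pi.single 0 1 - Pi.single 1 1
  have hsum {V : Type} [NormedAddCommGroup V] [NormedSpace ℝ V] (v : ℕ → V) :
      ∑ i ∈ Finset.range (2 * j), a i • v i = v 0 - v 1 := by
    have h0 : 0 < 2 * j := by lia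
    have h1 : 1 < 2 * j := by lia
    simp [a, sub_smul, Finset.sum_sub_distrib, Pi.single_apply, ite_smul, h0, h1]
  have ha (i : ℕ) : |a i| ≤ 1 := by
    obtain rfl | hi := eq_or_ne i 0
    · simp [a]
    · simp only [a, Pi.sub_apply, Pi.single_eq_of_ne hi, zero_sub, abs_neg, Pi.single_apply]
      split_ifs <;> simp
  have := hclose (2 * j) a (fun i _ => ha i) (2 * j + ·)
    (fun _ _ h => Nat.add_lt_add_left h _) le_rfl
  simpa only [hsum, hsum fun i => y (2 * j + i), add_zero, Real.norm_eq_abs,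
    Function.comp_apply] using this

theorem exists_tendsto_norm_sub_pairs_of_norm_eq_one (hx : HasUnitSpreadingDifferences x)
    (hy : IsBlockSequence x y) (hnorm : ∀ j, ‖y j‖ = 1) (hnull : WeaklyNull y) :
    ∃ φ : ℕ → ℕ, StrictMono φ ∧
      Tendsto (fun j => ‖y (φ (2 * j)) - y (φ (2 * j + 1))‖) atTop (𝓝 1) := by
  obtain ⟨φ, hφ, E, _, _, _, e, he⟩ := exists_subsequence_isSpreadingModel fun j => (hnorm j).le
  have hne (j : ℕ) : (y ∘ φ) j ≠ 0 := norm_ne_zero_iff.1 (by simp [hnorm])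
  have hdiff := hx E (y ∘ φ) e ((hy.comp hφ).isBlockBasis hne) (fun j => hnorm _) (hnull.comp hφ) he
  exact ⟨φ, hφ, hdiff ▸ he.tendsto_norm_sub_pairs⟩

theorem IsAsymptoticBlock.exists_tendsto_norm_sub_pairs (hx : HasUnitSpreadingDifferences x)
    (hy : IsAsymptoticBlock x y) (hne : ∀ j, y j ≠ 0) :
    ∃ φ : ℕ → ℕ, StrictMono φ ∧
      Tendsto (fun j => ‖y (φ (2 * j)) - y (φ (2 * j + 1))‖) atTop (𝓝 1) := by
  let z (j : ℕ) : X := ‖y j‖⁻¹ • y j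
  have hznorm (j : ℕ) : ‖z j‖ = 1 := norm_smul_inv_norm (𝕜 := ℝ) (hne j)
  have hyz : Tendsto (fun j => y j - z j) atTop (𝓝 0) := by
    have hzero : Tendsto (fun j => ‖‖y j‖ - 1‖) atTop (𝓝 0) := by
      simpa using (hy.norm_tendsto.sub_const 1).norm
    refine tendsto_zero_iff_norm_tendsto_zero.2 (hzero.congr fun j => ?_)
    have : y j - z j = (‖y j‖ - 1) • z j := by
      rw [sub_smul, one_smul, smul_inv_smul₀ (norm_ne_zero_iff.2 (hne j))]
    rw [this, norm_smul, hznorm, mul_one]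
  obtain ⟨φ, hφ, hlim⟩ := exists_tendsto_norm_sub_pairs_of_norm_eq_one hx
    (hy.block.smul fun j => ‖y j‖⁻¹) hznorm
    (hy.weaklyNull.smul_of_tendsto (hy.norm_tendsto.inv₀ one_ne_zero))
  refine ⟨φ, hφ, ?_⟩
  have heven := hyz.comp (hφ.comp (strictMono_mul_left_of_pos two_pos)).tendsto_atTop
  have hodd := hyz.comp (hφ.comp ((strictMono_mul_left_of_pos two_pos).add_const 1)).tendsto_atTop
  refine hlim.congr_dist ?_
  refine squeeze_zero (fun _ => dist_nonneg) (fun j => ?_) (by simpa using (heven.sub hodd).norm)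
  rw [Real.dist_eq, abs_sub_comm]
  exact (abs_norm_sub_norm_le _ _).trans_eq (congrArg norm (sub_sub_sub_comm ..))

theorem IsAsymptoticBlock.exists_sub_pairs (hx : HasUnitSpreadingDifferences x)
    (hy : IsAsymptoticBlock x y) :
    ∃ φ : ℕ → ℕ, StrictMono φ ∧ IsAsymptoticBlock x fun j => y (φ (2 * j)) - y (φ (2 * j + 1)) := by
  obtain ⟨j₀, hj₀⟩ := eventually_atTop.1 (hy.norm_tendsto.eventually_ne one_ne_zero)
  have hshift : StrictMono (j₀ + ·) := fun _ _ h => Nat.add_lt_add_left h j₀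
  obtain ⟨φ, hφ, hlim⟩ := (hy.comp hshift).exists_tendsto_norm_sub_pairs hx fun j =>
    norm_ne_zero_iff.1 (hj₀ _ (Nat.le_add_right j₀ j))
  have hsub := hy.comp (hshift.comp hφ)
  exact ⟨(j₀ + ·) ∘ φ, hshift.comp hφ, hsub.block.sub_pairs, hlim,
    (hsub.weaklyNull.comp (strictMono_mul_left_of_pos two_pos)).sub
      (hsub.weaklyNull.comp ((strictMono_mul_left_of_pos two_pos).add_const 1))⟩

end BlockSequences

section ThueMorse

/-- The Thue–Morse signs `1, -1, -1, 1, -1, 1, 1, -1, …`. -/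
def thueMorse (i : ℕ) : ℝ := (-1) ^ (Nat.digits 2 i).sum

@[simp]
theorem thueMorse_two_mul (i : ℕ) : thueMorse (2 * i) = thueMorse i := by
  obtain rfl | hi := i.eq_zero_or_pos
  · simp
  · rw [thueMorse, Nat.digits_def' (by norm_num) (by lia)]
    simp [thueMorse]

@[simp]
theorem thueMorse_two_mul_add_one (i : ℕ) : thueMorse (2 * i + 1) = -thueMorse i := by
  rw [thueMorse, Nat.digits_def' (by norm_num) (by lia)]
  simp [thueMorse, pow_add, Nat.mul_add_div]

theorem exists_strictMono_thueMorse_eq_one :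
    ∃ τ : ℕ → ℕ, StrictMono τ ∧ (∀ i, τ i < 2 * i + 2) ∧ ∀ i, thueMorse (τ i) = 1 := by
  have hpair (i : ℕ) : ∃ t, 2 * i ≤ t ∧ t < 2 * i + 2 ∧ thueMorse t = 1 := by
    obtain h | h := neg_one_pow_eq_or ℝ (Nat.digits 2 i).sum
    · exact ⟨2 * i, le_rfl, by lia, (thueMorse_two_mul i).trans h⟩
    · exact ⟨2 * i + 1, by lia, by lia, by rw [thueMorse_two_mul_add_one, thueMorse, h, neg_neg]⟩
  choose τ hge hlt hone using hpair
  exact ⟨τ, strictMono_nat_of_lt_succ fun i => (hlt i).trans_le (hge (i + 1)), hlt, hone⟩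

theorem sum_range_two_mul {M : Type*} [AddCommMonoid M] (f : ℕ → M) (n : ℕ) :
    ∑ i ∈ Finset.range (2 * n), f i = ∑ i ∈ Finset.range n, (f (2 * i) + f (2 * i + 1)) := by
  induction n with
  | zero => simp
  | succ n ih => rw [Nat.mul_succ, Finset.sum_range_succ, Finset.sum_range_succ, ih,
      Finset.sum_range_succ, add_assoc]

variable {X : Type} [NormedAddCommGroup X] [NormedSpace ℝ X] {x y : ℕ → X}

/-- Each doubling of the length passes to successive differences. -/
theorem IsAsymptoticBlock.exists_norm_thueMorse_sum_le (hx : HasUnitSpreadingDifferences x)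
    (m : ℕ) (hy : IsAsymptoticBlock x y) {ε : ℝ} (hε : 0 < ε) :
    ∃ k : ℕ → ℕ, StrictMono k ∧
      ‖∑ i ∈ Finset.range (2 ^ m), thueMorse i • y (k i)‖ ≤ 1 + ε := by
  induction m generalizing y with
  | zero =>
    obtain ⟨j, hj⟩ := (hy.norm_tendsto.eventually_le_const (lt_add_of_pos_right 1 hε)).exists
    exact ⟨(j + ·), fun _ _ h => Nat.add_lt_add_left h j, by simpa [thueMorse] using hj⟩
  | succ m ih =>
    obtain ⟨φ, hφ, hdiff⟩ := hy.exists_sub_pairs hx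
    obtain ⟨k, hk, hle⟩ := ih hdiff
    refine ⟨fun i => φ (2 * k (i / 2) + i % 2), strictMono_nat_of_lt_succ fun i => hφ ?_, ?_⟩
    · obtain h | h := Nat.mod_two_eq_zero_or_one i
      · rw [show (i + 1) / 2 = i / 2 by lia]
        lia
      · have := hk (i / 2).lt_succ_self
        rw [show (i + 1) / 2 = i / 2 + 1 by lia]
        lia
    · convert hle using 2
      rw [pow_succ', sum_range_two_mul]
      refine Finset.sum_congr rfl fun i _ => ?_
      beta_reduce
      rw [thueMorse_two_mul, thueMorse_two_mul_add_one, neg_smul, ← sub_eq_add_neg, ← smul_sub,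
        show 2 * i / 2 = i by lia, show 2 * i % 2 = 0 by lia, show (2 * i + 1) / 2 = i by lia,
        show (2 * i + 1) % 2 = 1 by lia, add_zero]

theorem IsAsymptoticBlock.exists_norm_sum_le (hx : HasUnitSpreadingDifferences x)
    (hy : IsAsymptoticBlock x y) (n : ℕ) {ε : ℝ} (hε : 0 < ε) :
    ∃ τ : ℕ → ℕ, StrictMono τ ∧ ‖∑ i ∈ Finset.range n, y (τ i)‖ ≤ 1 + ε := by
  have hdep : DependsOn (fun k : ℕ → ℕ =>
      ‖∑ i ∈ Finset.range (2 ^ (n + 1)), thueMorse i • y (k i)‖ ≤ 1 + ε / 2)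
      (Set.Iio (2 ^ (n + 1))) := fun k k' hkk' => by
    beta_reduce
    rw [Finset.sum_congr rfl fun i hi => by rw [hkk' i (Finset.mem_range.1 hi)]]
  obtain ⟨B, -, hB, hhom⟩ :=
    (isSelectable_forall_or_forall_not hdep).exists_subset _ Set.infinite_univ
  have hφ : StrictMono (Nat.nth (· ∈ B)) := Nat.nth_strictMono hB
  have hmem {k : ℕ → ℕ} (hk : StrictMono k) : Nat.nth (· ∈ B) ∘ k ∈ increasingIn B :=
    ⟨hφ.comp hk, fun i => Nat.nth_mem_of_infinite hB (k i)⟩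
  have hyB := hy.comp hφ
  obtain ⟨k, hk, hle⟩ := hyB.exists_norm_thueMorse_sum_le hx (n + 1) (half_pos hε)
  have hall := hhom.resolve_right fun h => h _ (hmem hk) hle
  obtain ⟨u, hu, hsub⟩ := hyB.weaklyNull.exists_strictMono_norm_sum_subset_le
    (fun k hk => hall _ (hmem hk)) (half_pos hε)
  obtain ⟨τ, hτ, hτlt, hτone⟩ := exists_strictMono_thueMorse_eq_one
  have hrange : (Finset.range n).image τ ⊆ Finset.range (2 ^ (n + 1)) := by
    simp only [Finset.image_subset_iff, Finset.mem_range]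
    intro i hi
    have := Nat.lt_two_pow_self (n := n)
    have := hτlt i
    rw [pow_succ]
    lia
  refine ⟨Nat.nth (· ∈ B) ∘ u ∘ τ, hφ.comp (hu.comp hτ), ?_⟩
  have := hsub _ hrange
  rw [Finset.sum_image hτ.injective.injOn] at this
  simpa [hτone, add_assoc] using this

end ThueMorse

section BlockPowers

variable {𝓐 𝓑 𝓕 : Set (Finset ℕ)} {A B F G : Finset ℕ} {L M : Set ℕ}

theorem isInitialSegmentOfSet_self (G : Finset ℕ) : IsInitialSegmentOfSet G ↑G :=
  ⟨G.sup id, fun _ => ⟨fun ha => ⟨ha, Finset.le_sup (f := id) ha⟩, And.left⟩⟩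

theorem IsInitialSegmentOf.isInitialSegmentOfSet (h : IsInitialSegmentOf F G) :
    IsInitialSegmentOfSet F ↑G :=
  h.imp fun _ hm _ => by rw [hm, Finset.mem_filter, Finset.mem_coe]

theorem IsInitialSegmentOfSet.isLeast (h : IsInitialSegmentOfSet G L) (hG : G.Nonempty) {n : ℕ}
    (hn : IsLeast L n) : IsLeast ↑G n := by
  obtain ⟨m, hm⟩ := h
  obtain ⟨a, ha⟩ := hG
  have ha' := (hm a).1 ha
  exact ⟨(hm n).2 ⟨hn.1, (hn.2 ha'.1).trans ha'.2⟩, fun b hb => hn.2 ((hm b).1 hb).1⟩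

theorem IsInitialSegmentOfSet.union (hA : IsInitialSegmentOfSet A L)
    (hB : IsInitialSegmentOfSet B (L ∩ above A)) : IsInitialSegmentOfSet (A ∪ B) L := by
  obtain ⟨m, hm⟩ := hA
  obtain ⟨n, hn⟩ := hB
  refine ⟨max m n, fun a => ?_⟩
  rw [Finset.mem_union, le_max_iff]
  refine ⟨?_, fun ⟨haL, hle⟩ => ?_⟩
  · rintro (ha | ha)
    · exact ⟨((hm a).1 ha).1, .inl ((hm a).1 ha).2⟩
    · exact ⟨((hn a).1 ha).1.1, .inr ((hn a).1 ha).2⟩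
  · by_cases haA : a ∈ above A
    · exact hle.imp (fun h => (hm a).2 ⟨haL, h⟩) fun h => (hn a).2 ⟨⟨haL, haA⟩, h⟩
    · simp only [above, Set.mem_ofPred_eq, not_forall, not_lt] at haA
      obtain ⟨b, hb, hab⟩ := haA
      exact .inl ((hm a).2 ⟨haL, hab.trans ((hm b).1 hb).2⟩)

theorem IsInitialSegmentOfSet.of_union (h : IsInitialSegmentOfSet (A ∪ B) L) (hA : A.Nonempty)
    (hBA : ↑B ⊆ above A) : IsInitialSegmentOfSet A L ∧ IsInitialSegmentOfSet B (L ∩ above A) := by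
  obtain ⟨m, hm⟩ := h
  simp only [Finset.mem_union] at hm
  have hmax := A.max'_mem hA
  refine ⟨⟨A.max' hA, fun a => ⟨fun ha => ⟨((hm a).1 (.inl ha)).1, A.le_max' a ha⟩, ?_⟩⟩,
    ⟨m, fun b => ⟨fun hb => ?_, ?_⟩⟩⟩
  · rintro ⟨haL, hle⟩
    refine ((hm a).2 ⟨haL, hle.trans ((hm _).1 (.inl hmax)).2⟩).resolve_right fun haB => ?_
    exact (hBA haB _ hmax).not_ge hle
  · exact ⟨⟨((hm b).1 (.inr hb)).1, hBA hb⟩, ((hm b).1 (.inr hb)).2⟩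
  · rintro ⟨⟨hbL, hbA⟩, hle⟩
    exact ((hm b).2 ⟨hbL, hle⟩).resolve_left fun hb => (hbA b hb).false

/-- The family of unions `A ∪ B` with `A ∈ 𝓐`, `B ∈ 𝓑` and `A < B`. -/
def blockProduct (𝓐 𝓑 : Set (Finset ℕ)) : Set (Finset ℕ) :=
  {G | ∃ A ∈ 𝓐, ∃ B ∈ 𝓑, ↑B ⊆ above A ∧ G = A ∪ B}

theorem IsThinFamily.blockProduct (h𝓐 : IsThinFamily 𝓐) (hne : ∀ A ∈ 𝓐, A.Nonempty)
    (h𝓑 : IsThinFamily 𝓑) : IsThinFamily (blockProduct 𝓐 𝓑) := by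
  rintro _ ⟨A, hA, B, hB, hBA, rfl⟩ _ ⟨A', hA', B', hB', hBA', rfl⟩ h
  obtain ⟨hAL, hBL⟩ := h.isInitialSegmentOfSet.of_union (hne A hA) hBA
  obtain ⟨hAL', hBL'⟩ := (isInitialSegmentOfSet_self (A' ∪ B')).of_union (hne A' hA') hBA'
  obtain rfl := h𝓐.eq_of_isInitialSegmentOfSet hA hA' hAL hAL'
  rw [h𝓑.eq_of_isInitialSegmentOfSet hB hB' hBL hBL']

theorem IsLargeIn.blockProduct (h𝓐 : IsLargeIn 𝓐 M) (h𝓑 : IsLargeIn 𝓑 M) :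
    IsLargeIn (blockProduct 𝓐 𝓑) M := by
  intro L hLM hL
  obtain ⟨A, hA, hAL⟩ := h𝓐 L hLM hL
  obtain ⟨B, hB, hBL⟩ :=
    h𝓑 (L ∩ above A) (Set.inter_subset_left.trans hLM) (infinite_inter_above hL A)
  exact ⟨A ∪ B, ⟨A, hA, B, hB, hBL.subset.trans Set.inter_subset_right, rfl⟩, hAL.union hBL⟩

/-- The family of unions `E₀ ∪ ⋯ ∪ Eₖ` of `k + 1` successive members of `𝓕`; see
`mem_blockPower_iff`. -/
def blockPower (𝓕 : Set (Finset ℕ)) : ℕ → Set (Finset ℕ)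
  | 0 => 𝓕
  | k + 1 => blockProduct (blockPower 𝓕 k) 𝓕

theorem nonempty_of_mem_blockPower (hne : ∀ F ∈ 𝓕, F.Nonempty) {k : ℕ} (hG : G ∈ blockPower 𝓕 k) :
    G.Nonempty := by
  cases k with
  | zero => exact hne G hG
  | succ k =>
    obtain ⟨A, -, B, hB, -, rfl⟩ := hG
    exact (hne B hB).inr

theorem IsThinFamily.blockPower (h𝓕 : IsThinFamily 𝓕) (hne : ∀ F ∈ 𝓕, F.Nonempty) (k : ℕ) :
    IsThinFamily (blockPower 𝓕 k) := by
  induction k with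
  | zero => exact h𝓕
  | succ k ih => exact ih.blockProduct (fun _ => nonempty_of_mem_blockPower hne) h𝓕

theorem IsLargeIn.blockPower (h𝓕 : IsLargeIn 𝓕 M) (k : ℕ) : IsLargeIn (blockPower 𝓕 k) M := by
  induction k with
  | zero => exact h𝓕
  | succ k ih => exact ih.blockProduct h𝓕

theorem subset_above_biUnion_range {E : ℕ → Finset ℕ} {n : ℕ} :
    ↑B ⊆ above ((Finset.range n).biUnion E) ↔ ∀ i < n, ↑B ⊆ above (E i) := by
  simp only [above, Set.subset_def, Finset.mem_coe, Finset.mem_biUnion, Finset.mem_range,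
    Set.mem_ofPred_eq]
  exact ⟨fun h i hi b hb a ha => h b hb a ⟨i, hi, ha⟩, fun h b hb a ⟨i, hi, ha⟩ => h i hi b hb a ha⟩

theorem mem_blockPower_iff {k : ℕ} : G ∈ blockPower 𝓕 k ↔ ∃ E : ℕ → Finset ℕ,
    (∀ i < k + 1, E i ∈ 𝓕) ∧ (∀ j < k + 1, ∀ i < j, ↑(E j) ⊆ above (E i)) ∧
      G = (Finset.range (k + 1)).biUnion E := by
  induction k generalizing G with
  | zero =>
    refine ⟨fun hG => ⟨fun _ => G, fun _ _ => hG, by lia, by simp⟩, ?_⟩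
    rintro ⟨E, hE, -, rfl⟩
    simpa [blockPower] using hE 0 one_pos
  | succ k ih =>
    constructor
    · rintro ⟨A, hA, B, hB, hBA, rfl⟩
      obtain ⟨E, hE, hlt, rfl⟩ := ih.1 hA
      rw [subset_above_biUnion_range] at hBA
      refine ⟨Function.update E (k + 1) B, Nat.forall_lt_succ_right.2 ⟨fun i hi => ?_, ?_⟩,
        Nat.forall_lt_succ_right.2 ⟨fun j hj i hij => ?_, fun i hi => ?_⟩, ?_⟩
      · simpa [hi.ne] using hE i hi
      · simpa using hB
      · simpa [hj.ne, (hij.trans hj).ne] using hlt j hj i hij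
      · simpa [hi.ne] using hBA i hi
      · rw [Finset.range_add_one (n := k + 1), Finset.biUnion_insert, Function.update_self,
          Finset.union_comm]
        congr 1
        refine Finset.biUnion_congr rfl fun i hi => ?_
        rw [Function.update_of_ne (Finset.mem_range.1 hi).ne]
    · rintro ⟨E, hE, hlt, rfl⟩
      refine ⟨_, ih.2 ⟨E, fun i hi => hE i (by lia), fun j hj => hlt j (by lia), rfl⟩, E (k + 1),
        hE _ (by lia), subset_above_biUnion_range.2 (hlt _ (by lia)), ?_⟩
      rw [Finset.range_add_one (n := k + 1), Finset.biUnion_insert, Finset.union_comm]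

theorem subset_above_of_forall_succ {E : ℕ → Finset ℕ} {k : ℕ} (hne : ∀ i < k, (E i).Nonempty)
    (hlt : ∀ i, i + 1 < k → ↑(E (i + 1)) ⊆ above (E i)) {i j : ℕ} (hij : i < j) (hj : j < k) :
    ↑(E j) ⊆ above (E i) := by
  induction j, hij using Nat.le_induction with
  | base => exact hlt i hj
  | succ j _ ih =>
    intro c hc a ha
    obtain ⟨b, hb⟩ := hne j (by lia)
    exact (ih (by lia) hb a ha).trans (hlt j hj hc b hb)

theorem IsLargeIn.exists_sequence (h𝓕 : IsLargeIn 𝓕 M) (hLM : L ⊆ M) (hL : L.Infinite) :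
    ∃ (E : ℕ → Finset ℕ) (p : ℕ → ℕ), StrictMono p ∧
      ∀ j, E j ∈ 𝓕 ∧ ↑(E j) ⊆ L ∩ Set.Ico (p j) (p (j + 1)) := by
  have hnext (n : ℕ) : ∃ m > n, ∃ F ∈ 𝓕, ↑F ⊆ L ∩ Set.Ico n m := by
    obtain ⟨F, hF, hFL⟩ := h𝓕 (L \ Set.Iio n) (Set.sdiff_subset.trans hLM)
      (hL.sdiff (Set.finite_Iio n))
    refine ⟨n + 1 + F.sup id, by lia, F, hF, fun a ha => ?_⟩
    have haL := hFL.subset ha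
    have hle : a ≤ F.sup id := Finset.le_sup (f := id) ha
    exact ⟨haL.1, not_lt.1 haL.2, by lia⟩
  choose m hm F hF hsub using hnext
  have hiter (j : ℕ) : m^[j + 1] 0 = m (m^[j] 0) := Function.iterate_succ_apply' m j 0
  refine ⟨fun j => F (m^[j] 0), fun j => m^[j] 0,
    strictMono_nat_of_lt_succ fun j => (hm _).trans_eq (hiter j).symm, fun j => ⟨hF _, ?_⟩⟩
  simpa only [hiter] using hsub (m^[j] 0)

end BlockPowers

section GFamily

variable {𝓕 : Set (Finset ℕ)} {N : ℕ → ℕ}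

theorem mem_gFamily_iff (hne : ∀ F ∈ 𝓕, F.Nonempty) {G : Finset ℕ} :
    G ∈ GFamily 𝓕 N ↔ ∃ k, G ∈ blockPower 𝓕 k ∧ ↑G ⊆ Set.range N ∧ IsLeast ↑G (N k) := by
  constructor
  · rintro ⟨k, E, hk, hE, hadj, hmem, hleast, rfl⟩
    obtain ⟨k, rfl⟩ := Nat.exists_eq_add_one.2 hk
    have hlt : ∀ j < k + 1, ∀ i < j, ↑(E j) ⊆ above (E i) := fun j hj i hij =>
      subset_above_of_forall_succ (fun i hi => (hE i hi).2.1)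
        (fun i hi b hb a ha => hadj i hi a ha b hb) hij hj
    refine ⟨k, mem_blockPower_iff.2 ⟨E, fun i hi => (hE i hi).1, hlt, rfl⟩, ?_, ?_, ?_⟩
    · simpa using fun i hi => (hE i hi).2.2
    · exact Finset.mem_biUnion.2 ⟨0, Finset.mem_range.2 hk, hmem⟩
    · intro b hb
      obtain ⟨i, hi, hbi⟩ := Finset.mem_biUnion.1 hb
      obtain rfl | hpos := i.eq_zero_or_pos
      · exact hleast b hbi
      · exact (hlt i (Finset.mem_range.1 hi) 0 hpos hbi _ hmem).le
  · rintro ⟨k, hG, hsub, hmem, hleast⟩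
    obtain ⟨E, hE, hlt, rfl⟩ := mem_blockPower_iff.1 hG
    have hEG {i : ℕ} (hi : i < k + 1) : E i ⊆ (Finset.range (k + 1)).biUnion E :=
      Finset.subset_biUnion_of_mem E (Finset.mem_range.2 hi)
    refine ⟨k + 1, E, k.succ_pos, fun i hi => ⟨hE i hi, hne _ (hE i hi),
      (Finset.coe_subset.2 (hEG hi)).trans hsub⟩,
      fun i hi a ha b hb => hlt (i + 1) hi i i.lt_succ_self hb a ha, ?_,
      fun a ha => hleast (hEG k.succ_pos ha), rfl⟩
    obtain ⟨i, hi, hmem⟩ := Finset.mem_biUnion.1 hmem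
    obtain rfl | hpos := i.eq_zero_or_pos
    · exact hmem
    · obtain ⟨a, ha⟩ := hne _ (hE 0 k.succ_pos)
      have := hlt i (Finset.mem_range.1 hi) 0 hpos hmem a ha
      exact absurd (hleast (hEG k.succ_pos ha)) this.not_ge

theorem IsThinFamily.gFamily (h𝓕 : IsThinFamily 𝓕) (hne : ∀ F ∈ 𝓕, F.Nonempty)
    (hN : N.Injective) : IsThinFamily (GFamily 𝓕 N) := by
  intro G hG G' hG' hGG'
  obtain ⟨k, hG, -, hleast⟩ := (mem_gFamily_iff hne).1 hG
  obtain ⟨k', hG', -, hleast'⟩ := (mem_gFamily_iff hne).1 hG'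
  have := hGG'.isInitialSegmentOfSet.isLeast (nonempty_of_mem_blockPower hne hG) hleast'
  obtain rfl := hN (hleast.unique this)
  exact h𝓕.blockPower hne k G hG G' hG' hGG'

theorem IsLargeIn.gFamily (h𝓕 : IsLargeIn 𝓕 (Set.range N)) (hne : ∀ F ∈ 𝓕, F.Nonempty) :
    IsLargeIn (GFamily 𝓕 N) (Set.range N) := by
  intro L hLN hL
  have hleast : IsLeast L (sInf L) := ⟨Nat.sInf_mem hL.nonempty, fun _ => Nat.sInf_le⟩
  obtain ⟨k, hk⟩ := hLN hleast.1
  obtain ⟨G, hG, hGL⟩ := h𝓕.blockPower k L hLN hL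
  refine ⟨G, (mem_gFamily_iff hne).2 ⟨k, hG, hGL.subset.trans hLN, ?_⟩, hGL⟩
  exact hGL.isLeast (nonempty_of_mem_blockPower hne hG) (hk ▸ hleast)

end GFamily

section HeadLowerBound

theorem IsSelectable.of_eventually {p : ℕ → Prop} (hp : ∀ᶠ n in atTop, p n) :
    IsSelectable fun A => ∀ n ∈ A, p n where
  antitone _ _ hBA h n hn := h n (hBA hn)
  exists_subset A hA := by
    obtain ⟨N, hN⟩ := eventually_atTop.1 hp
    exact ⟨A \ Set.Iio N, Set.sdiff_subset, hA.sdiff (Set.finite_Iio N),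
      fun n hn => hN n (not_lt.1 hn.2)⟩

theorem sum_le_two_mul_half_pow {g : ℕ → ℝ} {S : Finset ℕ} {i : ℕ} (hi : ∀ n ∈ S, i < n)
    (hg : ∀ m ∈ insert i S, ∀ n ∈ S, m < n → g n ≤ (1 / 2) ^ m) :
    ∑ n ∈ S, g n ≤ 2 * (1 / 2) ^ i := by
  induction S using Finset.induction_on_min generalizing i with
  | empty => simp
  | insert a S ha ih =>
    have hia : i < a := hi a (Finset.mem_insert_self a S)
    have hhead : g a ≤ (1 / 2) ^ i :=
      hg i (Finset.mem_insert_self i _) a (Finset.mem_insert_self a S) hia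
    have htail : ∑ n ∈ S, g n ≤ 2 * (1 / 2) ^ a := ih ha fun m hm n hn =>
      hg m (Finset.mem_insert_of_mem hm) n (Finset.mem_insert_of_mem hn)
    have hpow : ((1 / 2) ^ a : ℝ) ≤ (1 / 2) ^ (i + 1) :=
      pow_le_pow_of_le_one (by norm_num) (by norm_num) hia
    rw [Finset.sum_insert fun h => (ha a h).false]
    rw [pow_succ] at hpow
    linarith

variable {X : Type} [NormedAddCommGroup X] {x : ℕ → X} {A : Set ℕ}
  {𝓗 : Set (Finset ℕ)} {ε : ℝ}

/-- On `A`, the norm of a sum `∑ i ∈ E, x i` is almost at least that of its first term. -/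
def HasHeadLowerBound (x : ℕ → X) (A : Set ℕ) : Prop :=
  ∀ E : Finset ℕ, ↑E ⊆ A → ∀ i, IsLeast ↑E i → ‖x i‖ - 2 * (1 / 2) ^ i ≤ ‖∑ n ∈ E, x n‖

theorem HasHeadLowerBound.eventually_one_sub_lt_norm_sum (hA : HasHeadLowerBound x A)
    (hx : ∀ i, 1 ≤ ‖x i‖) (hε : 0 < ε) : ∀ᶠ n in atTop, ∀ E : Finset ℕ, ↑E ⊆ A → E.Nonempty →
      (∀ i ∈ E, n ≤ i) → 1 - ε < ‖∑ i ∈ E, x i‖ := by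
  have hlim : Tendsto (fun n : ℕ => 2 * (1 / 2 : ℝ) ^ n) atTop (𝓝 (2 * 0)) :=
    (tendsto_pow_atTop_nhds_zero_of_lt_one (by norm_num) (by norm_num)).const_mul 2
  filter_upwards [hlim.eventually_lt_const (by simpa using hε)] with n hn E hEA hE hnE
  have hmin := E.isLeast_min' hE
  have hpow : ((1 / 2) ^ E.min' hE : ℝ) ≤ (1 / 2) ^ n :=
    pow_le_pow_of_le_one (by norm_num) (by norm_num) (hnE _ hmin.1)
  linarith [hA E hEA _ hmin, hx (E.min' hE)]

theorem HasHeadLowerBound.exists_one_sub_lt_norm_sum (hA : HasHeadLowerBound x A)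
    (hx : ∀ i, 1 ≤ ‖x i‖) (hinf : A.Infinite) (h𝓗 : IsLargeIn 𝓗 A) (hne : ∀ G ∈ 𝓗, G.Nonempty)
    (hε : 0 < ε) (n : ℕ) : ∃ G ∈ 𝓗, (∀ i ∈ G, n ≤ i) ∧ 1 - ε < ‖∑ i ∈ G, x i‖ := by
  obtain ⟨m, hm, hnm⟩ :=
    ((hA.eventually_one_sub_lt_norm_sum hx hε).and (eventually_ge_atTop n)).exists
  obtain ⟨G, hG, hGA⟩ :=
    h𝓗 (A \ Set.Iio m) Set.sdiff_subset (hinf.sdiff (Set.finite_Iio m))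
  have hmG : ∀ i ∈ G, m ≤ i := fun i hi => not_lt.1 (hGA.subset hi).2
  exact ⟨G, hG, fun i hi => hnm.trans (hmG i hi),
    hm G (hGA.subset.trans Set.sdiff_subset) (hne G hG) hmG⟩

/-- Far out, a functional norming `x i` almost vanishes on the terms after `x i`. -/
theorem WeaklyNull.isSelectable_hasHeadLowerBound [NormedSpace ℝ X] (hx : WeaklyNull x) :
    IsSelectable (HasHeadLowerBound x) where
  antitone _ _ hBA h E hE := h E (hE.trans hBA)
  exists_subset M hM := by
    choose f hf hnorming using fun i => exists_dual_vector'' ℝ (x i)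
    have hsmall (s : Finset ℕ) :
        ∀ᶠ n in atTop, ∀ i ∈ s, |f i (x n)| ≤ (1 / 2) ^ s.sup id := by
      refine (Finset.eventually_all s).2 fun i _ => ?_
      have habs := (hx (f i)).abs
      rw [abs_zero] at habs
      exact habs.eventually_le_const (by positivity)
    obtain ⟨B, hBM, hB, hfB⟩ := (IsSelectable.forall_finset_above fun s =>
      IsSelectable.of_eventually (hsmall s)).exists_subset M hM
    refine ⟨B, hBM, hB, fun E hE i hi => ?_⟩
    have hlt : ∀ n ∈ E.erase i, i < n := fun n hn =>
      (hi.2 (Finset.mem_of_mem_erase hn)).lt_of_ne' (Finset.ne_of_mem_erase hn)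
    have htail : ∑ n ∈ E.erase i, |f i (x n)| ≤ 2 * (1 / 2) ^ i := by
      refine sum_le_two_mul_half_pow hlt fun m hm n hn hmn => ?_
      rw [Finset.insert_erase hi.1] at hm
      have him : i ≤ m := hi.2 hm
      have := hfB {i, m} (by simp [Set.insert_subset_iff, hE hi.1, hE hm]) n
        ⟨hE (Finset.mem_of_mem_erase hn), by simp [above, hlt n hn, hmn]⟩ i (by simp)
      simpa [him] using this
    calc ‖x i‖ - 2 * (1 / 2) ^ i
        ≤ f i (x i) + ∑ n ∈ E.erase i, f i (x n) := by
          have := (abs_le.1 ((Finset.abs_sum_le_sum_abs _ _).trans htail)).1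
          rw [show f i (x i) = ‖x i‖ from hnorming i]
          linarith
      _ = f i (∑ n ∈ E, x n) := by
          rw [map_sum, Finset.add_sum_erase E (fun n => f i (x n)) hi.1]
      _ ≤ ‖∑ n ∈ E, x n‖ := (le_abs_self _).trans <|
          ((f i).le_of_opNorm_le (hf i) _).trans_eq (one_mul _)

end HeadLowerBound

section NormBounds

variable {X : Type} [NormedAddCommGroup X] {x : ℕ → X} {𝓕 : Set (Finset ℕ)}
  {L M : Set ℕ}

theorem exists_forall_mem_gFamily_norm_sum_le {N : ℕ → ℕ} (hN : StrictMono N)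
    (hne : ∀ F ∈ 𝓕, F.Nonempty)
    (hbound : ∀ k, ∀ G ∈ blockPower 𝓕 k, ↑G ⊆ N '' Set.Ici k →
      ‖∑ i ∈ G, x i‖ ≤ 1 + 1 / ((k : ℝ) + 1)) {ε : ℝ} (hε : 0 < ε) :
    ∃ n, ∀ G ∈ GFamily 𝓕 N, (∀ i ∈ G, n ≤ i) → ‖∑ i ∈ G, x i‖ ≤ 1 + ε := by
  obtain ⟨K, hK⟩ := exists_nat_one_div_lt hε
  refine ⟨N K, fun G hG hge => ?_⟩
  obtain ⟨k, hGk, hsub, hleast⟩ := (mem_gFamily_iff hne).1 hG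
  have hKk : K ≤ k := hN.le_iff_le.1 (hge _ hleast.1)
  have htail : ↑G ⊆ N '' Set.Ici k := fun a ha => by
    obtain ⟨j, rfl⟩ := hsub ha
    exact ⟨j, hN.le_iff_le.1 (hleast.2 ha), rfl⟩
  calc ‖∑ i ∈ G, x i‖ ≤ 1 + 1 / ((k : ℝ) + 1) := hbound k G hGk htail
    _ ≤ 1 + 1 / ((K : ℝ) + 1) := by gcongr
    _ ≤ 1 + ε := by gcongr

variable [NormedSpace ℝ X]

/-- The hypothesis on `𝓕`: the vectors `x_{E₀}, x_{E₁}, …` form a weakly null sequence for all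
successive members `E₀ < E₁ < …` of `𝓕`. -/
def HasWeaklyNullSums (x : ℕ → X) (𝓕 : Set (Finset ℕ)) : Prop :=
  ∀ E : ℕ → Finset ℕ, (∀ n, E n ∈ 𝓕) → (∀ n, ∀ a ∈ E n, ∀ b ∈ E (n + 1), a < b) →
    WeaklyNull fun n => ∑ i ∈ E n, x i

theorem TailSupNormOne.nonempty_of_mem (hsup : TailSupNormOne x 𝓕) (h𝓕 : IsThinFamily 𝓕)
    {F : Finset ℕ} (hF : F ∈ 𝓕) : F.Nonempty := by
  obtain ⟨E, hE, hpos, hnorm⟩ := hsup.2 1 one_pos 1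
  rw [Finset.nonempty_iff_ne_empty]
  rintro rfl
  have hinit : IsInitialSegmentOf ∅ E :=
    ⟨0, (Finset.filter_false_of_mem fun i hi => (hpos i hi).not_gt ∘ Nat.lt_one_iff.2 ∘
      Nat.le_zero.1).symm⟩
  simp [← h𝓕 ∅ hF E hE hinit] at hnorm

theorem HasHeadLowerBound.exists_isAsymptoticBlock_sum (hL : HasHeadLowerBound x L)
    (hx : ∀ i, 1 ≤ ‖x i‖) (h𝓕 : IsLargeIn 𝓕 M) (hne : ∀ F ∈ 𝓕, F.Nonempty)
    (hweaknull : HasWeaklyNullSums x 𝓕)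
    (hsup : TailSupNormOne x 𝓕) (hLM : L ⊆ M) (hinf : L.Infinite) :
    ∃ E : ℕ → Finset ℕ, (∀ j, E j ∈ 𝓕 ∧ ↑(E j) ⊆ L) ∧ (∀ i j, i < j → ↑(E j) ⊆ above (E i)) ∧
      IsAsymptoticBlock x fun j => ∑ i ∈ E j, x i := by
  obtain ⟨E, p, hp, hE⟩ := h𝓕.exists_sequence hLM hinf
  have hlt (i j : ℕ) (hij : i < j) : ↑(E j) ⊆ above (E i) := fun b hb a ha =>
    ((hE i).2 ha).2.2.trans_le ((hp.monotone hij).trans ((hE j).2 hb).2.1)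
  have hge (j : ℕ) : ∀ i ∈ E j, j ≤ i := fun i hi => (hp.le_apply).trans ((hE j).2 hi).2.1
  have hEL (j : ℕ) : ↑(E j) ⊆ L := (hE j).2.trans Set.inter_subset_left
  refine ⟨E, fun j => ⟨(hE j).1, hEL j⟩, hlt, ⟨p, hp, fun j => ?_⟩,
    tendsto_order.2 ⟨fun a ha => ?_, fun a ha => ?_⟩,
    hweaknull E (fun j => (hE j).1) fun n a ha b hb => hlt n (n + 1) n.lt_succ_self hb a ha⟩
  · exact Submodule.sum_mem _ fun i hi =>
      Submodule.subset_span (Set.mem_image_of_mem x ((hE j).2 hi).2)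
  · filter_upwards [hL.eventually_one_sub_lt_norm_sum hx (sub_pos.2 ha)] with j hj
    simpa using hj (E j) (hEL j) (hne _ (hE j).1) (hge j)
  · obtain ⟨n, hn⟩ := hsup.1 ((a - 1) / 2) (by linarith)
    filter_upwards [eventually_ge_atTop n] with j hj
    linarith [hn (E j) (hE j).1 fun i hi => hj.trans (hge j i hi)]

/-- By homogeneity a single `G` with a small norm suffices. -/
theorem isSelectable_forall_blockPower_norm_sum_le (hsm : HasUnitSpreadingDifferences x)
    (hx : ∀ i, 1 ≤ ‖x i‖) (hwn : WeaklyNull x) (hthin : IsThinFamily 𝓕)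
    (hlarge : IsLargeIn 𝓕 Set.univ)
    (hweaknull : HasWeaklyNullSums x 𝓕)
    (hsup : TailSupNormOne x 𝓕) (k : ℕ) {ε : ℝ} (hε : 0 < ε) :
    IsSelectable fun A => ∀ G ∈ blockPower 𝓕 k, ↑G ⊆ A → ‖∑ i ∈ G, x i‖ ≤ 1 + ε where
  antitone _ _ hBA h G hG hGB := h G hG (hGB.trans hBA)
  exists_subset A hA := by
    have hne := fun F => hsup.nonempty_of_mem hthin (F := F)
    obtain ⟨B, hBA, hB, hlow, hhom⟩ := (hwn.isSelectable_hasHeadLowerBound.and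
      ((hthin.blockPower hne k).isSelectable_homogeneous
        fun G => ‖∑ i ∈ G, x i‖ ≤ 1 + ε)).exists_subset A hA
    refine ⟨B, hBA, hB, hhom.resolve_right fun hlt_norm => ?_⟩
    obtain ⟨E, hE, hlt, hblock⟩ :=
      hlow.exists_isAsymptoticBlock_sum hx hlarge hne hweaknull hsup (Set.subset_univ B) hB
    obtain ⟨τ, hτ, hle⟩ := hblock.exists_norm_sum_le hsm (k + 1) hε
    have hdisj : Pairwise fun i j => Disjoint (E (τ i)) (E (τ j)) := by
      refine (pairwise_disjoint_on fun i => E (τ i)).2 fun i j hij => ?_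
      exact Finset.disjoint_left.2 fun a ha ha' => (hlt _ _ (hτ hij) ha' a ha).false
    refine hlt_norm ((Finset.range (k + 1)).biUnion fun i => E (τ i)) (mem_blockPower_iff.2
      ⟨fun i => E (τ i), fun i _ => (hE _).1, fun j _ i hij => hlt _ _ (hτ hij), rfl⟩) ?_ ?_
    · simpa using fun i _ => (hE (τ i)).2
    · rwa [Finset.sum_biUnion (hdisj.set_pairwise _)]

theorem induction_step_lemma_general (hx : ∀ i, 1 ≤ ‖x i‖) (hwn : WeaklyNull x)
    (hsm : HasUnitSpreadingDifferences x) (hthin : IsThinFamily 𝓕) (hlarge : IsLargeIn 𝓕 Set.univ)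
    (hweaknull : HasWeaklyNullSums x 𝓕)
    (hsup : TailSupNormOne x 𝓕) :
    ∃ N : ℕ → ℕ, StrictMono N ∧ IsThinFamily (GFamily 𝓕 N) ∧
      IsLargeIn (GFamily 𝓕 N) (Set.range N) ∧ TailSupNormOne x (GFamily 𝓕 N) := by
  have hne := fun F => hsup.nonempty_of_mem hthin (F := F)
  obtain ⟨N, hN, -, hbounds⟩ := IsSelectable.exists_strictMono_forall_image_Ici
    (fun k => hwn.isSelectable_hasHeadLowerBound.and
      (isSelectable_forall_blockPower_norm_sum_le hsm hx hwn hthin hlarge hweaknull hsup k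
        (Nat.one_div_pos_of_nat (α := ℝ)))) Set.infinite_univ
  have hlow : HasHeadLowerBound x (Set.range N) := by simpa using (hbounds 0).1
  have hlargeN : IsLargeIn (GFamily 𝓕 N) (Set.range N) :=
    IsLargeIn.gFamily (fun L _ => hlarge L (Set.subset_univ L)) hne
  have hneG : ∀ G ∈ GFamily 𝓕 N, G.Nonempty := fun G hG =>
    let ⟨_, _, _, hleast⟩ := (mem_gFamily_iff hne).1 hG
    ⟨_, hleast.1⟩
  exact ⟨N, hN, hthin.gFamily hne hN.injective, hlargeN,
    fun ε hε => exists_forall_mem_gFamily_norm_sum_le hN hne (fun k => (hbounds k).2) hε,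
    fun ε hε n => hlow.exists_one_sub_lt_norm_sum hx (Set.infinite_range_of_injective hN.injective)
      hlargeN hneG hε n⟩

end NormBounds

theorem induction_step_lemma
    {X : Type} [NormedAddCommGroup X] [NormedSpace ℝ X] [CompleteSpace X]
    (x : ℕ → X) (hbasis : IsSchauderBasis x) (hnorm : ∀ i, ‖x i‖ = 1)
    (hwn : WeaklyNull x) (hl1 : ¬ Embeds ellOne X)
    (hsm : ∀ (E : Type) [NormedAddCommGroup E] [NormedSpace ℝ E] [CompleteSpace E],
      ∀ (y : ℕ → X) (e : ℕ → E), IsBlockBasis x y → (∀ j, ‖y j‖ = 1) → WeaklyNull y →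
        IsSpreadingModel y e → ‖e 0 - e 1‖ = 1)
    (𝓕 : Set (Finset ℕ)) (hthin : IsThinFamily 𝓕) (hlarge : IsLargeIn 𝓕 Set.univ)
    (hweaknull : ∀ E : ℕ → Finset ℕ, (∀ n, E n ∈ 𝓕) →
      (∀ n, ∀ a ∈ E n, ∀ b ∈ E (n + 1), a < b) →
      WeaklyNull (fun n => ∑ i ∈ E n, x i))
    (hsup : TailSupNormOne x 𝓕) :
    ∃ N : ℕ → ℕ, StrictMono N ∧
      IsThinFamily (GFamily 𝓕 N) ∧
      IsLargeIn (GFamily 𝓕 N) (Set.range N) ∧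
      TailSupNormOne x (GFamily 𝓕 N) :=
  induction_step_lemma_general (fun i => (hnorm i).ge) hwn hsm hthin hlarge hweaknull hsup
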